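/- For 1 ≤ r ≤ x/4, ∑_{p ≤ √(x/r)} π(rp) = ∫₂^{√(x/r)} Li(ru)/(log u) du + O((x/log x)·exp(−c·√(log(x/r)))), where the sum is over primes, for some absolute constant c > 0. -/

import Mathlib

open scoped Classical

/-- The prime counting function with real argument. -/
noncomputable def primePi (y : ℝ) : ℕ := {p : ℕ | p.Prime ∧ (p : ℝ) ≤ y}.ncard

/-- The logarithmic integral `Li y = ∫₂^y du / log u`. -/
noncomputable def Li (y : ℝ) : ℝ := ∫ u in (2 : ℝ)..y, 1 / Real.log u

open Complex Metric in
theorem bc_logDeriv0 {h : ℂ → ℂ} {ρ M : ℝ} (hρ : 0 < ρ) (hM : 0 < M)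
    (hd : DifferentiableOn ℂ h (ball 0 ρ)) (hne : ∀ z ∈ ball (0:ℂ) ρ, h z ≠ 0)
    (hb : ∀ z ∈ ball (0:ℂ) ρ, ‖h z‖ ≤ Real.exp M * ‖h 0‖) {z : ℂ} (hz : ‖z‖ ≤ ρ / 2) :
    ‖deriv h z / h z‖ ≤ 24 * M / ρ := by
  have hdd : DifferentiableOn ℂ (fun z => deriv h z / h z) (ball 0 ρ) :=
    (hd.deriv isOpen_ball).div hd hne
  obtain ⟨G0, hG0⟩ := hdd.isExactOn_ball
  have h0mem : (0:ℂ) ∈ ball (0:ℂ) ρ := mem_ball_self hρ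
  set G : ℂ → ℂ := fun z => G0 z - G0 0 with hGdef
  have hG : ∀ w ∈ ball (0:ℂ) ρ, HasDerivAt G (deriv h w / h w) w := fun w hw =>
    (hG0 w hw).sub_const _
  have hG00 : G 0 = 0 := by simp [hGdef]
  have hh : ∀ w ∈ ball (0:ℂ) ρ, HasDerivAt h (deriv h w) w := fun w hw =>
    ((hd w hw).differentiableAt (isOpen_ball.mem_nhds hw)).hasDerivAt
  have key : ∀ w ∈ ball (0:ℂ) ρ, h w * exp (-G w) = h 0 := by
    intro w hw
    have hder : ∀ w ∈ ball (0:ℂ) ρ, HasDerivAt (fun w => h w * exp (-G w)) 0 w := by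
      intro w hw
      have := (hh w hw).mul ((hG w hw).neg.cexp)
      refine this.congr_deriv ?_
      have := hne w hw
      symm
      change (0:ℂ) = deriv h w * cexp (-G w) + h w * (cexp (-G w) * -(deriv h w / h w))
      field_simp
      ring
    have hc := (convex_ball (0:ℂ) ρ).is_const_of_fderivWithin_eq_zero (𝕜 := ℂ)
      (f := fun w => h w * exp (-G w))
      (fun w hw => (hder w hw).differentiableAt.differentiableWithinAt)
      (fun w hw => by
        rw [fderivWithin_of_isOpen isOpen_ball hw]
        have := (hder w hw).hasFDerivAt.fderiv
        rw [this]; ext; simp) hw h0mem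
    simpa [hG00] using hc
  have h0ne := hne 0 h0mem
  have hre : Set.MapsTo G (ball 0 ρ) {z | z.re ≤ M} := by
    intro w hw
    have hk := key w hw
    have h1 : ‖h w‖ = Real.exp (G w).re * ‖h 0‖ := by
      have h2 : h w = exp (G w) * h 0 := by
        rw [← hk, mul_comm, mul_assoc, ← Complex.exp_add]; simp
      rw [h2, norm_mul, Complex.norm_exp]
    have h3 := hb w hw
    rw [h1] at h3
    have h4 : 0 < ‖h 0‖ := norm_pos_iff.mpr h0ne
    have h5 := le_of_mul_le_mul_right h3 h4
    exact Real.exp_le_exp.mp h5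
  have hGd : DifferentiableOn ℂ G (ball 0 ρ) :=
    fun w hw => (hG w hw).differentiableAt.differentiableWithinAt
  have hzb : z ∈ ball (0:ℂ) ρ := by
    rw [mem_ball_zero_iff]; linarith
  have hsub : closedBall z (ρ/4) ⊆ closedBall (0:ℂ) (3*ρ/4) := by
    intro w hw
    rw [mem_closedBall, dist_eq_norm] at hw
    rw [mem_closedBall_zero_iff]
    have : ‖w‖ ≤ ‖w - z‖ + ‖z‖ := by simpa using norm_add_le (w - z) z
    linarith
  have hsub2 : closedBall (0:ℂ) (3*ρ/4) ⊆ ball 0 ρ := closedBall_subset_ball (by linarith)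
  have hbound : ∀ w ∈ sphere z (ρ/4), ‖G w‖ ≤ 6 * M := by
    intro w hw
    have hw1 := hsub (sphere_subset_closedBall hw)
    have hw2 := hsub2 hw1
    have := borelCaratheodory_zero hM hGd hre hρ hw2 hG00
    rw [mem_closedBall_zero_iff] at hw1
    refine this.trans ?_
    rw [div_le_iff₀ (by linarith)]
    nlinarith [mul_le_mul_of_nonneg_left hw1 hM.le]
  have hcl : DiffContOnCl ℂ G (ball z (ρ/4)) := by
    apply DifferentiableOn.diffContOnCl
    rw [closure_ball _ (by linarith : ρ/4 ≠ 0)]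
    exact hGd.mono (hsub.trans hsub2)
  have := norm_deriv_le_of_forall_mem_sphere_norm_le (by linarith : 0 < ρ/4) hcl hbound
  rw [(hG z hzb).deriv] at this
  refine this.trans (le_of_eq ?_)
  field_simp; ring

open Complex Metric in
theorem blaschke_step {f : ℂ → ℂ} {R R' B : ℝ} {ρ : ℂ} (hR : 0 < R) (hRR : R < R')
    (hd : DifferentiableOn ℂ f (ball 0 R')) (hb : ∀ z ∈ closedBall (0:ℂ) R, ‖f z‖ ≤ B)
    (hρ0 : ρ ≠ 0) (hρ : ‖ρ‖ ≤ R / 2) (hfρ : f ρ = 0) (hf0 : f 0 ≠ 0) :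
    ∃ g : ℂ → ℂ, DifferentiableOn ℂ g (ball 0 R') ∧ (∀ z ∈ closedBall (0:ℂ) R, ‖g z‖ ≤ B) ∧
      ‖g 0‖ * ‖ρ‖ = ‖f 0‖ * R ∧ g 0 ≠ 0 ∧ (∀ z ∈ closedBall (0:ℂ) R, g z = 0 → f z = 0) ∧
      deriv f 0 / f 0 = deriv g 0 / g 0 + (-1 / ρ + starRingEnd ℂ ρ / (R:ℂ) ^ 2) := by
  have hRc : (R:ℂ) ≠ 0 := by exact_mod_cast hR.ne'
  set k : ℂ → ℂ := fun z => ((R:ℂ)^2 - starRingEnd ℂ ρ * z) / R with hk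
  set g : ℂ → ℂ := fun z => dslope f ρ z * k z with hg
  have hρR' : ρ ∈ ball (0:ℂ) R' := by rw [mem_ball_zero_iff]; linarith
  have hfac : ∀ z, (z - ρ) * dslope f ρ z = f z := by
    intro z
    have := sub_smul_dslope f ρ z
    simpa [hfρ] using this
  have hfg : ∀ z, f z * k z = (z - ρ) * g z := by
    intro z; rw [← hfac z, hg]; ring
  have hkd : Differentiable ℂ k := by
    intro z; simp only [hk]; fun_prop
  have hgd : DifferentiableOn ℂ g (ball 0 R') :=
    ((differentiableOn_dslope (isOpen_ball.mem_nhds hρR')).mpr hd).mul hkd.differentiableOn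
  have hkne : ∀ z ∈ closedBall (0:ℂ) R, k z ≠ 0 := by
    intro z hz h0
    rw [mem_closedBall_zero_iff] at hz
    simp only [hk, div_eq_zero_iff, hRc, or_false, sub_eq_zero] at h0
    have h1 : R^2 = ‖ρ‖ * ‖z‖ := by
      have := congrArg norm h0
      simpa [abs_of_pos hR] using this
    nlinarith [norm_nonneg z, norm_nonneg ρ]
  have hf0g : f 0 * R = - ρ * g 0 := by
    have := hfg 0
    simp only [hk, mul_zero, sub_zero, zero_sub] at this
    rw [← this]; field_simp
  refine ⟨g, hgd, ?_, ?_, ?_, ?_, ?_⟩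
  · have hcl : DiffContOnCl ℂ g (ball 0 R) := by
      apply DifferentiableOn.diffContOnCl
      rw [closure_ball _ hR.ne']
      exact hgd.mono (closedBall_subset_ball hRR)
    intro z hz
    refine norm_le_of_forall_mem_frontier_norm_le isBounded_ball hcl (C := B) ?_
      (by rwa [closure_ball _ hR.ne'])
    intro w hw
    rw [frontier_ball _ hR.ne'] at hw
    have hwn : ‖w‖ = R := by simpa using hw
    have hw1 := hb w (sphere_subset_closedBall hw)
    have hkk : ‖k w‖ = ‖w - ρ‖ := by
      have h1 : (R:ℂ)^2 = starRingEnd ℂ w * w := by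
        rw [← Complex.normSq_eq_conj_mul_self, Complex.normSq_eq_norm_sq, hwn]; simp
      have h2 : k w = starRingEnd ℂ (w - ρ) * w / R := by
        simp only [hk]; rw [h1, map_sub]; ring
      rw [h2, norm_div, norm_mul, RCLike.norm_conj, hwn]
      simp only [norm_real, Real.norm_eq_abs, abs_of_pos hR]
      field_simp
    calc ‖g w‖ = ‖(w - ρ) * dslope f ρ w‖ := by
          simp only [hg]; rw [norm_mul, norm_mul, hkk]; ring
      _ ≤ B := by rw [hfac]; exact hw1
  · have := congrArg norm hf0g
    simp only [norm_mul, norm_neg, norm_real, Real.norm_eq_abs, abs_of_pos hR] at this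
    rw [this]; ring
  · intro h0
    rw [h0, mul_zero] at hf0g
    exact (mul_ne_zero hf0 hRc) hf0g
  · intro z hz h0
    have h1 := hfg z
    rw [h0, mul_zero] at h1
    exact (mul_eq_zero.mp h1).resolve_right (hkne z hz)
  · have hR'0 : (0:ℂ) ∈ ball (0:ℂ) R' := mem_ball_self (hR.trans hRR)
    have hnh := isOpen_ball.mem_nhds hR'0
    have hfd := ((hd 0 hR'0).differentiableAt hnh).hasDerivAt
    have hgd' := ((hgd 0 hR'0).differentiableAt hnh).hasDerivAt
    have hkd' : HasDerivAt k (-(starRingEnd ℂ ρ) / R) 0 := by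
      simp only [hk]
      have := (((hasDerivAt_id (0:ℂ)).const_mul (starRingEnd ℂ ρ)).const_sub ((R:ℂ)^2)).div_const (R:ℂ)
      simpa using this
    have h1 := hfd.mul hkd'
    have h2 := ((hasDerivAt_id (0:ℂ)).sub_const ρ).mul hgd'
    have heq : (f * k) = (fun z => (id z - ρ)) * g := by
      ext z; simpa using hfg z
    rw [heq] at h1
    have h3 := h1.unique h2
    have hk0 : k 0 = R := by simp only [hk]; field_simp; simp
    simp only [hk0, id] at h3
    have hg0 : g 0 ≠ 0 := by
      intro h0
      rw [h0, mul_zero] at hf0g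
      exact (mul_ne_zero hf0 hRc) hf0g
    have hf0' : f 0 = -ρ * g 0 / R := by rw [← hf0g]; field_simp
    have h4 : deriv f 0 = (g 0 - ρ * deriv g 0 + f 0 * starRingEnd ℂ ρ / R) / R := by
      field_simp
      field_simp at h3
      linear_combination h3
    rw [h4, hf0']
    field_simp
    ring

open Complex Metric in
/-- Landau type lower bound: all zeros in the left half plane. -/
theorem landau_lower (n : ℕ) : ∀ {f : ℂ → ℂ} {R R' B : ℝ}, 0 < R → R < R' →
    DifferentiableOn ℂ f (ball 0 R') → (∀ z ∈ closedBall (0:ℂ) R, ‖f z‖ ≤ B) → f 0 ≠ 0 →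
    B < 2 ^ n * ‖f 0‖ → (∀ z ∈ closedBall (0:ℂ) R, f z = 0 → z.re ≤ 0) →
    ∀ M : ℝ, 0 < M → B ≤ Real.exp M * ‖f 0‖ →
    -(48 * M / R) ≤ (deriv f 0 / f 0).re := by
  induction n with
  | zero =>
    intro f R R' B hR hRR hd hb hf0 hB
    have := hb 0 (mem_closedBall_self hR.le)
    simp at hB; linarith
  | succ n ih =>
    intro f R R' B hR hRR hd hb hf0 hB hz M hM hBM
    by_cases hex : ∃ ρ ∈ ball (0:ℂ) (R/2), f ρ = 0
    · obtain ⟨ρ, hρb, hρ⟩ := hex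
      rw [mem_ball_zero_iff] at hρb
      have hρ0 : ρ ≠ 0 := by rintro rfl; exact hf0 hρ
      have hρn : 0 < ‖ρ‖ := norm_pos_iff.mpr hρ0
      obtain ⟨g, hgd, hgb, hg0, hgne, hgz, hlog⟩ :=
        blaschke_step hR hRR hd hb hρ0 hρb.le hρ hf0
      have hf0n : 0 < ‖f 0‖ := norm_pos_iff.mpr hf0
      have hg2 : 2 * ‖f 0‖ ≤ ‖g 0‖ := by
        have : 2 * ‖f 0‖ * ‖ρ‖ ≤ ‖g 0‖ * ‖ρ‖ := by rw [hg0]; nlinarith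
        exact le_of_mul_le_mul_right this hρn
      have := ih hR hRR hgd hgb hgne (by
          rw [pow_succ] at hB
          have : (2:ℝ)^n * (2 * ‖f 0‖) ≤ 2^n * ‖g 0‖ := by gcongr
          linarith) (fun z hz' h0 => hz z hz' (hgz z hz' h0)) M hM (by
          refine hBM.trans ?_
          gcongr; linarith)
      rw [hlog, add_re]
      have hre : 0 ≤ (-1 / ρ + starRingEnd ℂ ρ / (R:ℂ) ^ 2).re := by
        have hρre := hz ρ (by rw [mem_closedBall_zero_iff]; linarith) hρ
        have h1 : (-1 / ρ + starRingEnd ℂ ρ / (R:ℂ) ^ 2).re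
            = (-ρ.re) * (1/ ‖ρ‖^2 - 1 / R^2) := by
          rw [add_re, neg_div, neg_re, one_div, Complex.inv_re, Complex.normSq_eq_norm_sq]
          rw [← ofReal_pow, div_ofReal_re]
          simp; ring
        rw [h1]
        apply mul_nonneg (by linarith)
        rw [sub_nonneg]
        apply one_div_le_one_div_of_le (by positivity)
        gcongr; linarith
      linarith
    · push Not at hex
      have := bc_logDeriv0 (h := f) (ρ := R/2) (M := M) (by linarith) hM
        (hd.mono (ball_subset_ball (by linarith))) hex (by
          intro z hz
          refine (hb z ?_).trans hBM
          rw [mem_ball_zero_iff] at hz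
          rw [mem_closedBall_zero_iff]; linarith) (z := 0) (by simp; linarith)
      have h2 := (abs_le.mp ((abs_re_le_norm (deriv f 0 / f 0)).trans this)).1
      have h3 : 24 * M / (R/2) = 48 * M / R := by field_simp; ring
      linarith

open Complex Metric in
theorem landau_lower' {f : ℂ → ℂ} {R R' : ℝ} (hR : 0 < R) (hRR : R < R')
    (hd : DifferentiableOn ℂ f (ball 0 R')) {M : ℝ} (hM : 0 < M)
    (hb : ∀ z ∈ closedBall (0:ℂ) R, ‖f z‖ ≤ Real.exp M * ‖f 0‖) (hf0 : f 0 ≠ 0)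
    (hz : ∀ z ∈ closedBall (0:ℂ) R, f z = 0 → z.re ≤ 0) :
    -(48 * M / R) ≤ (deriv f 0 / f 0).re := by
  have hf0n : 0 < ‖f 0‖ := norm_pos_iff.mpr hf0
  obtain ⟨n, hn⟩ := pow_unbounded_of_one_lt (Real.exp M) (one_lt_two)
  exact landau_lower n hR hRR hd hb hf0 (by gcongr) hz M hM le_rfl

open Complex Metric in
theorem landau_lower_zero {f : ℂ → ℂ} {R R' : ℝ} (hR : 0 < R) (hRR : R < R')
    (hd : DifferentiableOn ℂ f (ball 0 R')) {M : ℝ} (hM : 0 < M)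
    (hb : ∀ z ∈ closedBall (0:ℂ) R, ‖f z‖ ≤ Real.exp M * ‖f 0‖) (hf0 : f 0 ≠ 0)
    (hz : ∀ z ∈ closedBall (0:ℂ) R, f z = 0 → z.re ≤ 0) {b : ℝ} (hb0 : 0 < b) (hbR : b ≤ R / 2)
    (hfb : f (-(b:ℂ)) = 0) :
    1 / b - 1 / R - 48 * M / R ≤ (deriv f 0 / f 0).re := by
  obtain ⟨g, hgd, hgb, hg0, hgne, hgz, hlog⟩ :=
    blaschke_step (ρ := -(b:ℂ)) hR hRR hd hb (by simpa using hb0.ne') (by simpa [abs_of_pos hb0])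
      hfb hf0
  have hf0n : 0 < ‖f 0‖ := norm_pos_iff.mpr hf0
  have hfg : ‖f 0‖ ≤ ‖g 0‖ := by
    simp only [norm_neg, norm_real, Real.norm_eq_abs, abs_of_pos hb0] at hg0
    have : ‖f 0‖ * b ≤ ‖g 0‖ * b := by rw [hg0]; gcongr; linarith
    exact le_of_mul_le_mul_right this hb0
  have := landau_lower' hR hRR hgd hM (fun z hz => (hgb z hz).trans (by gcongr)) hgne
    (fun z hz' h0 => hz z hz' (hgz z hz' h0))
  rw [hlog, add_re]
  have h1 : (-1 / (-(b:ℂ)) + starRingEnd ℂ (-(b:ℂ)) / (R:ℂ) ^ 2).re = 1 / b - b / R^2 := by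
    have : (-1 / (-(b:ℂ)) + starRingEnd ℂ (-(b:ℂ)) / (R:ℂ) ^ 2) = ((1 / b - b / R^2 : ℝ) : ℂ) := by
      push_cast; rw [map_neg, conj_ofReal]; ring
    rw [this, ofReal_re]
  rw [h1]
  have h2 : b / R^2 ≤ 1 / R := by
    rw [div_le_div_iff₀ (by positivity) hR]; nlinarith
  linarith

open MeasureTheory Set Filter Topology Asymptotics in
theorem hfun_diff {s : ℂ} (hs : 0 < s.re) :
    DifferentiableAt ℂ (fun s : ℂ => ∫ t in Ioi (1:ℝ), ((Int.fract t : ℝ) : ℂ) * (t:ℂ) ^ (-(s + 1))) s := by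
  set h : ℝ → ℂ := (Ioi (1:ℝ)).indicator (fun t => ((Int.fract t : ℝ) : ℂ)) with hh
  have hmeas : Measurable h := by
    apply Measurable.indicator _ measurableSet_Ioi
    exact Complex.measurable_ofReal.comp measurable_fract
  have hbd : ∀ t, ‖h t‖ ≤ 1 := by
    intro t
    simp only [hh, indicator]
    split_ifs
    · rw [Complex.norm_real, Real.norm_eq_abs, abs_of_nonneg (Int.fract_nonneg t)]
      exact (Int.fract_lt_one t).le
    · simp
  have heq : (fun s : ℂ => ∫ t in Ioi (1:ℝ), ((Int.fract t : ℝ) : ℂ) * (t:ℂ) ^ (-(s + 1)))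
      = fun s => mellin h (-s) := by
    ext s
    rw [mellin]
    rw [← integral_indicator measurableSet_Ioi, ← integral_indicator measurableSet_Ioi]
    congr 1
    ext t
    simp only [hh, indicator, mem_Ioi]
    by_cases h1 : 1 < t
    · have h0 : 0 < t := by linarith
      simp only [h1, h0, if_true, smul_eq_mul]
      rw [mul_comm, neg_add, sub_eq_add_neg]
    · simp [h1]
  rw [heq]
  have hd : DifferentiableAt ℂ (mellin h) (-s) := by
    apply mellin_differentiableAt_of_isBigO_rpow (a := 0) (b := -s.re - 1)
    · have : LocallyIntegrable h volume := by
        intro x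
        refine ⟨Ioo (x-1) (x+1), Ioo_mem_nhds (by linarith) (by linarith), ?_⟩
        apply Measure.integrableOn_of_bounded (M := 1) (by simp) hmeas.aestronglyMeasurable
        exact Eventually.of_forall hbd
      exact this.locallyIntegrableOn _
    · apply IsBigO.of_bound 1
      filter_upwards with t
      simpa using hbd t
    · simpa using hs
    · apply IsBigO.of_bound 1
      have : Iio (1:ℝ) ∈ 𝓝[>] (0:ℝ) := mem_nhdsWithin_of_mem_nhds (Iio_mem_nhds one_pos)
      filter_upwards [this] with t ht
      have : h t = 0 := by
        simp only [hh, indicator, mem_Ioi]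
        rw [if_neg (by simp at ht; linarith)]
      rw [this]; simp
    · simp
  exact hd.comp s (differentiableAt_id.neg)

open MeasureTheory Set Filter Topology Asymptotics in
theorem hfun_bound {s : ℂ} (hs : 0 < s.re) :
    ‖∫ t in Ioi (1:ℝ), ((Int.fract t : ℝ) : ℂ) * (t:ℂ) ^ (-(s + 1))‖ ≤ 1 / s.re := by
  have h1 : ∫ t in Ioi (1:ℝ), t ^ (-(s.re+1)) = 1 / s.re := by
    rw [integral_Ioi_rpow_of_lt (by linarith) one_pos]
    simp
  rw [← h1]
  apply norm_integral_le_of_norm_le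
  · exact integrableOn_Ioi_rpow_of_lt (by linarith) one_pos
  · rw [ae_restrict_iff' measurableSet_Ioi]
    filter_upwards with t ht
    have ht0 : (0:ℝ) < t := lt_trans one_pos ht
    rw [norm_mul, Complex.norm_cpow_eq_rpow_re_of_pos ht0, Complex.norm_real, Real.norm_eq_abs,
      abs_of_nonneg (Int.fract_nonneg t)]
    simp only [Complex.neg_re, Complex.add_re, Complex.one_re]
    have := (Int.fract_lt_one t).le
    have h2 : 0 ≤ t ^ (-(s.re+1)) := by positivity
    nlinarith

open MeasureTheory Set Filter Topology Asymptotics in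
theorem zeta_formula_aux {s : ℂ} (hs : 1 < s.re) :
    riemannZeta₀ s = 1 - s * ∫ t in Ioi (1:ℝ), ((Int.fract t : ℝ) : ℂ) * (t:ℂ) ^ (-(s + 1)) := by
  have hs1 : s ≠ 1 := by rintro rfl; simp at hs
  have hs1' : s - 1 ≠ 0 := sub_ne_zero.mpr hs1
  have hL := LSeries_eq_mul_integral_of_nonneg (fun _ => (1:ℝ)) (zero_le_one) hs (by
    apply IsBigO.of_bound 1
    filter_upwards with n
    simp) (fun _ => zero_le_one)
  have hz : LSeries (fun _ => ((1:ℝ):ℂ)) s = riemannZeta s := by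
    rw [← LSeries_one_eq_riemannZeta hs]; congr
  rw [hz] at hL
  have hInt : ∫ t in Ioi (1:ℝ), (∑ k ∈ Finset.Icc 1 ⌊t⌋₊, (((1:ℝ)):ℂ)) * (t:ℂ) ^ (-(s + 1))
      = 1/(s-1) - ∫ t in Ioi (1:ℝ), ((Int.fract t : ℝ) : ℂ) * (t:ℂ) ^ (-(s + 1)) := by
    have h1 : ∫ t in Ioi (1:ℝ), (t:ℂ) ^ (-s) = 1/(s-1) := by
      rw [integral_Ioi_cpow_of_lt (by simpa using hs) one_pos]
      simp only [Complex.ofReal_one, Complex.one_cpow]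
      have : -s + 1 ≠ 0 := by intro h; apply hs1'; linear_combination -h
      field_simp; ring
    have hi1 : IntegrableOn (fun t:ℝ => (t:ℂ) ^ (-s)) (Ioi 1) :=
      integrableOn_Ioi_cpow_of_lt (by simpa using hs) one_pos
    have hi2 : IntegrableOn (fun t:ℝ => ((Int.fract t : ℝ) : ℂ) * (t:ℂ) ^ (-(s + 1))) (Ioi 1) := by
      have hi3 : IntegrableOn (fun t:ℝ => (t:ℂ) ^ (-(s+1))) (Ioi 1) :=
        integrableOn_Ioi_cpow_of_lt (by simp; linarith) one_pos
      apply hi3.bdd_mul (c := 1)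
      · exact (Complex.measurable_ofReal.comp measurable_fract).aestronglyMeasurable
      · filter_upwards with t
        rw [Complex.norm_real, Real.norm_eq_abs, abs_of_nonneg (Int.fract_nonneg t)]
        exact (Int.fract_lt_one t).le
    rw [← h1, ← integral_sub hi1 hi2]
    apply setIntegral_congr_fun measurableSet_Ioi
    intro t ht
    have ht0 : (0:ℝ) < t := lt_trans one_pos ht
    have htc : (t:ℂ) ≠ 0 := by exact_mod_cast ht0.ne'
    simp only [Complex.ofReal_one, Finset.sum_const, Nat.card_Icc, add_tsub_cancel_right, nsmul_eq_mul, mul_one]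
    have h2 : (t:ℂ) ^ (-s) = t * (t:ℂ) ^ (-(s+1)) := by
      rw [show -s = 1 + (-(s+1)) by ring, Complex.cpow_add _ _ htc, Complex.cpow_one]
    rw [h2, ← sub_mul]
    congr 1
    have h3 : ((⌊t⌋₊:ℕ):ℝ) = t - Int.fract t := by
      rw [natCast_floor_eq_intCast_floor ht0.le, Int.self_sub_fract]
    rw [← Complex.ofReal_sub, ← h3]
    simp
  rw [hInt] at hL
  rw [riemannZeta₀, if_neg hs1, hL]
  field_simp
  ring

open MeasureTheory Set Filter Topology Asymptotics in
theorem zeta_formula {s : ℂ} (hs : 0 < s.re) :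
    riemannZeta₀ s = 1 - s * ∫ t in Ioi (1:ℝ), ((Int.fract t : ℝ) : ℂ) * (t:ℂ) ^ (-(s + 1)) := by
  have hopen : IsOpen {s : ℂ | 0 < s.re} := isOpen_lt continuous_const Complex.continuous_re
  have hopen1 : IsOpen {s : ℂ | 1 < s.re} := isOpen_lt continuous_const Complex.continuous_re
  have hA : AnalyticOnNhd ℂ riemannZeta₀ {s : ℂ | 0 < s.re} :=
    (differentiable_riemannZeta₀.differentiableOn).analyticOnNhd hopen
  have hB : AnalyticOnNhd ℂ (fun s => 1 - s * ∫ t in Ioi (1:ℝ), ((Int.fract t : ℝ) : ℂ) * (t:ℂ) ^ (-(s + 1))) {s : ℂ | 0 < s.re} := by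
    apply DifferentiableOn.analyticOnNhd _ hopen
    intro s hs
    exact ((differentiableAt_id.mul (hfun_diff hs)).const_sub 1).differentiableWithinAt
  have hconv : IsPreconnected {s : ℂ | 0 < s.re} :=
    (convex_halfSpace_re_gt 0).isPreconnected
  have h2 : (2:ℂ) ∈ {s : ℂ | 0 < s.re} := by simp
  refine hA.eqOn_of_preconnected_of_eventuallyEq hB hconv h2 ?_ hs
  filter_upwards [hopen1.mem_nhds (show (2:ℂ) ∈ {s : ℂ | 1 < s.re} by simp)] with z hz
  exact zeta_formula_aux hz

theorem zeta0_bound {s : ℂ} (hs : 1/2 ≤ s.re) : ‖riemannZeta₀ s‖ ≤ 1 + 2 * ‖s‖ := by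
  rw [zeta_formula (by linarith)]
  refine (norm_sub_le _ _).trans ?_
  rw [norm_mul, norm_one]
  have h1 := hfun_bound (s := s) (by linarith)
  have h2 : 1 / s.re ≤ 2 := by
    rw [div_le_iff₀ (by linarith)]; linarith
  have := norm_nonneg s
  nlinarith [h1.trans h2]

theorem zeta1_bound {s : ℂ} (hs : 1/2 ≤ s.re) : ‖riemannZeta₁ s‖ ≤ 2 * (1 + ‖s‖)^2 := by
  rw [riemannZeta₁]
  refine (norm_add_le _ _).trans ?_
  rw [norm_mul, norm_one]
  have h1 := zeta0_bound hs
  have h2 : ‖s - 1‖ ≤ ‖s‖ + 1 := by simpa using norm_sub_le s 1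
  have h3 := mul_le_mul h2 h1 (norm_nonneg _) (by positivity)
  nlinarith [norm_nonneg s]

theorem zeta1_ne_zero {s : ℂ} (hs : 1 ≤ s.re) : riemannZeta₁ s ≠ 0 := by
  by_cases h1 : s = 1
  · simp [h1]
  · have := riemannZeta_ne_zero_of_one_le_re hs
    rw [riemannZeta_eq_inv_sub_mul h1] at this
    exact right_ne_zero_of_mul this

theorem logDeriv_zeta1 {s : ℂ} (hs : 1 < s.re) :
    deriv riemannZeta₁ s / riemannZeta₁ s = deriv riemannZeta s / riemannZeta s + 1 / (s - 1) := by
  have hs1 : s ≠ 1 := by rintro rfl; simp at hs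
  have hs1' : s - 1 ≠ 0 := sub_ne_zero.mpr hs1
  have heq : riemannZeta₁ =ᶠ[nhds s] fun z => (z - 1) * riemannZeta z := by
    filter_upwards [isOpen_ne.mem_nhds hs1] with z hz
    have hz' : z - 1 ≠ 0 := sub_ne_zero.mpr hz
    rw [riemannZeta_eq_inv_sub_mul hz]; field_simp
  have hd : HasDerivAt (fun z => (z - 1) * riemannZeta z) (1 * riemannZeta s + (s - 1) * deriv riemannZeta s) s :=
    ((hasDerivAt_id s).sub_const 1).mul (differentiableAt_riemannZeta hs1).hasDerivAt
  rw [heq.deriv_eq, heq.self_of_nhds, hd.deriv]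
  have hz := riemannZeta_ne_zero_of_one_lt_re hs
  field_simp
  ring

theorem vonMangoldt_eq_D {s : ℂ} (hs : 1 < s.re) :
    LSeries (fun n => ((ArithmeticFunction.vonMangoldt n : ℝ) : ℂ)) s
      = 1 / (s - 1) - deriv riemannZeta₁ s / riemannZeta₁ s := by
  have := ArithmeticFunction.LSeries_vonMangoldt_eq_deriv_riemannZeta_div hs
  rw [logDeriv_zeta1 hs, this]
  ring

theorem three_four_one {δ t : ℝ} (hδ : 0 < δ) :
    0 ≤ 3 * (LSeries (fun n => ((ArithmeticFunction.vonMangoldt n : ℝ) : ℂ)) (1 + δ : ℂ)).re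
      + 4 * (LSeries (fun n => ((ArithmeticFunction.vonMangoldt n : ℝ) : ℂ)) (1 + δ + t * Complex.I : ℂ)).re
      + (LSeries (fun n => ((ArithmeticFunction.vonMangoldt n : ℝ) : ℂ)) (1 + δ + (2 * t : ℝ) * Complex.I : ℂ)).re := by
  have hsum : ∀ u : ℝ, HasSum (fun n => (LSeries.term (fun n => ((ArithmeticFunction.vonMangoldt n : ℝ) : ℂ)) (1 + δ + u * Complex.I : ℂ) n).re)
      (LSeries (fun n => ((ArithmeticFunction.vonMangoldt n : ℝ) : ℂ)) (1 + δ + u * Complex.I : ℂ)).re := by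
    intro u
    have h1 : (1:ℝ) < (1 + δ + u * Complex.I : ℂ).re := by simp [hδ]
    exact Complex.hasSum_re (ArithmeticFunction.LSeriesSummable_vonMangoldt h1).hasSum
  have h0 := hsum 0
  simp only [Complex.ofReal_zero, zero_mul, add_zero] at h0
  have hs := ((h0.mul_left 3).add ((hsum t).mul_left 4)).add (hsum (2*t))
  refine hs.nonneg ?_
  intro n
  rcases Nat.eq_zero_or_pos n with rfl | hn
  · simp
  have hn0 : n ≠ 0 := hn.ne'
  have hnr : (0:ℝ) < n := by exact_mod_cast hn
  have hterm : ∀ u : ℝ, (LSeries.term (fun n => ((ArithmeticFunction.vonMangoldt n : ℝ) : ℂ)) (1 + δ + u * Complex.I : ℂ) n).re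
      = ArithmeticFunction.vonMangoldt n * (n:ℝ)^(-(1+δ)) * Real.cos (u * Real.log n) := by
    intro u
    rw [LSeries.term_of_ne_zero hn0]
    have hnc : (n:ℂ) ≠ 0 := by exact_mod_cast hn0
    rw [div_eq_mul_inv, ← Complex.cpow_neg, neg_add, Complex.cpow_add _ _ hnc]
    have h1 : (n:ℂ) ^ (-(1 + (δ:ℂ))) = (((n:ℝ)^(-(1+δ)) : ℝ) : ℂ) := by
      rw [Complex.ofReal_cpow hnr.le]; push_cast; rfl
    have h2 : (n:ℂ) ^ (-(u * Complex.I)) = Complex.exp (((-(u * Real.log n) : ℝ) : ℂ) * Complex.I) := by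
      rw [Complex.cpow_def_of_ne_zero hnc, ← Complex.natCast_log]
      congr 1; push_cast; ring
    rw [h1, h2, ← mul_assoc, ← Complex.ofReal_mul, Complex.re_ofReal_mul, Complex.exp_ofReal_mul_I_re,
      Real.cos_neg]
  have ht0 := hterm 0
  simp only [Complex.ofReal_zero, zero_mul, add_zero, Real.cos_zero, mul_one] at ht0
  change (0:ℝ) ≤ _
  rw [ht0, hterm t, hterm (2*t)]
  have hΛ : 0 ≤ ArithmeticFunction.vonMangoldt n * (n:ℝ)^(-(1+δ)) :=
    mul_nonneg ArithmeticFunction.vonMangoldt_nonneg (by positivity)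
  have hcos : Real.cos (2*t*Real.log n) = 2 * Real.cos (t*Real.log n)^2 - 1 := by
    rw [mul_assoc, Real.cos_two_mul]
  rw [hcos]
  nlinarith [mul_nonneg hΛ (sq_nonneg (Real.cos (t*Real.log n) + 1))]

theorem zeta1_lower {s : ℂ} {δ : ℝ} (hδ : 0 < δ) (hδ1 : δ ≤ 1) (hs : s.re = 1 + δ) :
    δ^2 / 6 ≤ ‖riemannZeta₁ s‖ := by
  have hs' : 1 < s.re := by linarith
  have hs1 : s ≠ 1 := by rintro rfl; simp at hs'
  have hs1' : s - 1 ≠ 0 := sub_ne_zero.mpr hs1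
  have hmu := ArithmeticFunction.LSeries_zeta_mul_Lseries_moebius hs'
  rw [ArithmeticFunction.LSeries_zeta_eq_riemannZeta hs'] at hmu
  have hσ : (1:ℝ) < ((1 + δ : ℝ) : ℂ).re := by simp [hδ]
  have hzr : ‖riemannZeta ((1 + δ : ℝ) : ℂ)‖ ≤ 6 / δ := by
    have hne : ((1 + δ : ℝ) : ℂ) ≠ 1 := by
      intro h; rw [h] at hσ; simp at hσ
    rw [riemannZeta_eq_inv_sub_add hne]
    refine (norm_add_le _ _).trans ?_
    have h1 : ‖(((1 + δ : ℝ) : ℂ) - 1)⁻¹‖ = 1 / δ := by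
      rw [norm_inv, show (((1 + δ : ℝ) : ℂ) - 1) = (δ:ℂ) by push_cast; ring, Complex.norm_real,
        Real.norm_eq_abs, abs_of_pos hδ, one_div]
    have h2 := zeta0_bound (s := ((1 + δ : ℝ) : ℂ)) (by simp; linarith)
    rw [Complex.norm_real, Real.norm_eq_abs, abs_of_pos (by linarith)] at h2
    rw [h1]
    have : 1 + 2 * (1 + δ) ≤ 5 / δ := by
      rw [le_div_iff₀ hδ]; nlinarith
    have h3 : 6 / δ = 1/δ + 5/δ := by ring
    linarith
  have hmub : ‖LSeries (fun n => ((ArithmeticFunction.moebius n : ℤ) : ℂ)) s‖ ≤ 6 / δ := by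
    refine le_trans ?_ hzr
    have hsumm := (ArithmeticFunction.LSeriesSummable_moebius_iff (s := s)).mpr hs'
    have hz := LSeriesHasSum_one hσ
    have hzre : HasSum (fun n => ‖LSeries.term 1 ((1 + δ : ℝ) : ℂ) n‖) ‖riemannZeta ((1 + δ : ℝ) : ℂ)‖ := by
      have h1 : ∀ n, LSeries.term 1 ((1 + δ : ℝ) : ℂ) n = ((‖LSeries.term 1 ((1 + δ : ℝ) : ℂ) n‖ : ℝ) : ℂ) := by
        intro n
        rcases Nat.eq_zero_or_pos n with rfl | hn
        · simp
        · have hnr : (0:ℝ) < n := by exact_mod_cast hn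
          rw [LSeries.term_of_ne_zero hn.ne']
          have : (n:ℂ) ^ (((1 + δ : ℝ)) : ℂ) = (((n:ℝ)^(1+δ) : ℝ) : ℂ) := by
            rw [Complex.ofReal_cpow hnr.le]; simp
          rw [this]
          simp only [Pi.one_apply, one_div, norm_inv, Complex.norm_real, Real.norm_eq_abs]
          rw [abs_of_pos (by positivity)]; push_cast; rfl
      have h2 : HasSum (fun n => ((‖LSeries.term 1 ((1 + δ : ℝ) : ℂ) n‖ : ℝ) : ℂ)) (riemannZeta ((1 + δ : ℝ) : ℂ)) := by
        have := hz
        rw [LSeriesHasSum] at this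
        simpa only [← h1] using this
      have h3 := Complex.hasSum_re h2
      simp only [Complex.ofReal_re] at h3
      have h4 : (riemannZeta ((1 + δ : ℝ) : ℂ)).re ≤ ‖riemannZeta ((1 + δ : ℝ) : ℂ)‖ := Complex.re_le_norm _
      have h5 : ‖riemannZeta ((1 + δ : ℝ) : ℂ)‖ ≤ (riemannZeta ((1 + δ : ℝ) : ℂ)).re := by
        rw [← h3.tsum_eq, ← h2.tsum_eq]
        refine (norm_tsum_le_tsum_norm ?_).trans (le_of_eq ?_)
        · simpa using h3.summable
        · simp
      rw [le_antisymm h5 h4]; exact h3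
    rw [LSeries, ← hzre.tsum_eq]
    refine (norm_tsum_le_tsum_norm hsumm.norm).trans ?_
    apply Summable.tsum_le_tsum _ hsumm.norm hzre.summable
    intro n
    rw [LSeries.norm_term_eq, LSeries.norm_term_eq]
    split_ifs
    · exact le_rfl
    · simp only [hs, Complex.ofReal_re, Pi.one_apply, norm_one]
      gcongr
      rw [Complex.norm_intCast]
      exact_mod_cast ArithmeticFunction.abs_moebius_le_one
  have h1 : 1 ≤ ‖riemannZeta s‖ * (6/δ) := by
    have := congrArg norm hmu
    rw [norm_mul, norm_one] at this
    rw [← this]; gcongr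
  have h2 : δ ≤ ‖s - 1‖ := by
    have := Complex.abs_re_le_norm (s - 1)
    rw [Complex.sub_re, hs] at this
    simp only [Complex.one_re, add_sub_cancel_left, abs_of_pos hδ] at this
    exact this
  rw [riemannZeta_eq_inv_sub_mul hs1, norm_mul, norm_inv] at h1
  have h3 : 0 < ‖s-1‖ := norm_pos_iff.mpr hs1'
  have h4 : δ * ‖s-1‖ ≤ 6 * ‖riemannZeta₁ s‖ := by
    field_simp at h1
    linarith
  nlinarith

open Metric in
theorem zeta1_ratio {s z : ℂ} {δ : ℝ} (hδ : 0 < δ) (hδ1 : δ ≤ 1/4) (hs : s.re = 1 + δ)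
    (hz : ‖z‖ ≤ 1/2) :
    ‖riemannZeta₁ (s + z)‖ ≤ Real.exp (2 * Real.log (|s.im| + 3) + 3 + 2 * Real.log (1/δ)) * ‖riemannZeta₁ s‖ := by
  have hzre : |z.re| ≤ 1/2 := (Complex.abs_re_le_norm z).trans hz
  have h1 := zeta1_bound (s := s + z) (by rw [Complex.add_re, hs]; linarith [(abs_le.mp hzre).1])
  have h2 : ‖s + z‖ ≤ |s.im| + 2 := by
    have := Complex.norm_le_abs_re_add_abs_im s
    rw [hs, abs_of_pos (by linarith : 0 < 1 + δ)] at this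
    linarith [norm_add_le s z]
  have h3 := zeta1_lower hδ (by linarith) hs
  have hp : 0 < |s.im| + 3 := by positivity
  have he : Real.exp (2 * Real.log (|s.im| + 3) + 3 + 2 * Real.log (1/δ)) = (|s.im|+3)^2 * Real.exp 3 * (1/δ)^2 := by
    rw [Real.exp_add, Real.exp_add, two_mul, two_mul, Real.exp_add, Real.exp_add, Real.exp_log hp, Real.exp_log (by positivity)]
    ring
  have he3 : 12 ≤ Real.exp 3 := by
    have h := Real.exp_one_gt_d9
    have : Real.exp 3 = Real.exp 1 ^ 3 := by rw [← Real.exp_nat_mul]; norm_num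
    rw [this]
    have : (2.7:ℝ)^3 ≤ Real.exp 1 ^ 3 := by gcongr; linarith
    norm_num at this; linarith
  rw [he]
  calc ‖riemannZeta₁ (s + z)‖ ≤ 2 * (1 + ‖s+z‖)^2 := h1
    _ ≤ 2 * (|s.im|+3)^2 := by
        have : 1 + ‖s+z‖ ≤ |s.im|+3 := by linarith
        gcongr
    _ = (|s.im|+3)^2 * 12 * (1/δ)^2 * (δ^2/6) := by field_simp; ring
    _ ≤ _ := by gcongr

theorem zeta1_M_pos {t δ : ℝ} (hδ : 0 < δ) (hδ1 : δ ≤ 1/4) : 0 < 2 * Real.log (|t| + 3) + 3 + 2 * Real.log (1/δ) := by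
  have h1 : 0 ≤ Real.log (|t|+3) := Real.log_nonneg (by linarith [abs_nonneg t])
  have h2 : 0 ≤ Real.log (1/δ) := Real.log_nonneg (by rw [le_div_iff₀ hδ]; linarith)
  linarith

theorem deriv_shift (s : ℂ) : deriv (fun z => riemannZeta₁ (s + z)) 0 = deriv riemannZeta₁ s := by
  rw [deriv_comp_const_add]; simp

open Metric in
theorem D_lower {s : ℂ} {δ : ℝ} (hδ : 0 < δ) (hδ1 : δ ≤ 1/4) (hs : s.re = 1 + δ) :
    -(96 * (2 * Real.log (|s.im| + 3) + 3 + 2 * Real.log (1/δ))) ≤ (deriv riemannZeta₁ s / riemannZeta₁ s).re := by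
  have := landau_lower' (f := fun z => riemannZeta₁ (s + z)) (R := 1/2) (R' := 1) (by norm_num) (by norm_num)
    (Differentiable.differentiableOn (differentiable_riemannZeta₁.comp (differentiable_id.const_add s)))
    (zeta1_M_pos (t := s.im) hδ hδ1)
    (by intro z hz; simpa using zeta1_ratio hδ hδ1 hs (by simpa using hz))
    (by simpa using zeta1_ne_zero (by linarith))
    (by
      intro z hz h0
      by_contra hc
      exact zeta1_ne_zero (s := s + z) (by rw [Complex.add_re]; linarith) h0)
  rw [deriv_shift] at this
  simp only [add_zero] at this
  linarith

open Metric in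
theorem D_lower_zero {s : ℂ} {δ b : ℝ} (hδ : 0 < δ) (hδ1 : δ ≤ 1/4) (hs : s.re = 1 + δ) (hb : 0 < b) (hb1 : b ≤ 1/4)
    (h0 : riemannZeta₁ (s - b) = 0) :
    1 / b - 2 - (96 * (2 * Real.log (|s.im| + 3) + 3 + 2 * Real.log (1/δ))) ≤ (deriv riemannZeta₁ s / riemannZeta₁ s).re := by
  have := landau_lower_zero (f := fun z => riemannZeta₁ (s + z)) (R := 1/2) (R' := 1) (by norm_num) (by norm_num)
    (Differentiable.differentiableOn (differentiable_riemannZeta₁.comp (differentiable_id.const_add s)))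
    (zeta1_M_pos (t := s.im) hδ hδ1)
    (by intro z hz; simpa using zeta1_ratio hδ hδ1 hs (by simpa using hz))
    (by simpa using zeta1_ne_zero (by linarith))
    (by
      intro z hz h0
      by_contra hc
      exact zeta1_ne_zero (s := s + z) (by rw [Complex.add_re]; linarith) h0)
    hb (by linarith) (by simpa [sub_eq_add_neg] using h0)
  rw [deriv_shift] at this
  simp only [add_zero] at this
  linarith

theorem D_real_bound : ∃ A : ℝ, 0 < A ∧ ∀ σ : ℝ, 1 ≤ σ → σ ≤ 2 → ‖deriv riemannZeta₁ σ / riemannZeta₁ σ‖ ≤ A := by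
  have hc : ContinuousOn (fun σ : ℝ => deriv riemannZeta₁ σ / riemannZeta₁ σ) (Set.Icc 1 2) := by
    apply ContinuousOn.div
    · apply Continuous.continuousOn
      have : Continuous (deriv riemannZeta₁) :=
        (differentiable_riemannZeta₁.contDiff (n := 1)).continuous_deriv le_rfl
      exact this.comp Complex.continuous_ofReal
    · exact (differentiable_riemannZeta₁.continuous.comp Complex.continuous_ofReal).continuousOn
    · intro σ hσ; exact zeta1_ne_zero (by simpa using hσ.1)
  obtain ⟨A, hA⟩ := isCompact_Icc.exists_bound_of_continuousOn hc
  exact ⟨max A 1, by positivity, fun σ h1 h2 => (hA σ ⟨h1, h2⟩).trans (le_max_left _ _)⟩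

theorem re_inv_le {δ t τ : ℝ} (hδ : 0 < δ) (hτ : 0 < τ) (ht : τ ≤ |t|) :
    (1 / ((1 + δ + t * Complex.I : ℂ) - 1)).re ≤ δ / τ^2 := by
  have : (1 + δ + t * Complex.I : ℂ) - 1 = (δ:ℂ) + t * Complex.I := by ring
  rw [this, one_div, Complex.inv_re]
  simp only [Complex.normSq_apply, Complex.add_re, Complex.add_im, Complex.ofReal_re, Complex.ofReal_im, Complex.mul_re,
    Complex.mul_im, Complex.I_re, Complex.I_im]
  have h : τ^2 ≤ t^2 := by rw [← sq_abs t]; gcongr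
  simp only [mul_zero, mul_one, sub_zero, add_zero, zero_add]
  apply div_le_div_of_nonneg_left hδ.le (by positivity)
  nlinarith

theorem exists_K (A0 : ℝ) : ∃ K : ℝ, 8 ≤ K ∧ A0 + 960 * Real.log K ≤ K / 4 := by
  have h1 := Real.isLittleO_log_id_atTop.bound (c := 1/7680) (by norm_num)
  obtain ⟨K, h1, h2, h3⟩ := (h1.and ((Filter.eventually_ge_atTop 8).and (Filter.eventually_ge_atTop (8*A0)))).exists
  refine ⟨K, h2, ?_⟩
  simp only [id, Real.norm_eq_abs, abs_of_pos (by linarith : 0 < K)] at h1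
  have := (le_abs_self _).trans h1
  linarith

theorem log_abs_ge_one (t : ℝ) : 1 ≤ Real.log (|t| + 3) := by
  rw [Real.le_log_iff_exp_le (by positivity)]
  linarith [Real.exp_one_lt_d9, abs_nonneg t]

theorem zero_free : ∃ c : ℝ, 0 < c ∧ c ≤ 1/8 ∧ ∀ s : ℂ, riemannZeta₁ s = 0 → s.re ≤ 1 - c / Real.log (|s.im| + 3) := by
  obtain ⟨A, hA, hAb⟩ := D_real_bound
  have hev : ∀ᶠ s in nhds (1:ℂ), riemannZeta₁ s ≠ 0 :=
    differentiable_riemannZeta₁.continuous.continuousAt.eventually_ne (zeta1_ne_zero (by simp))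
  obtain ⟨τ', hτ', hball⟩ := Metric.eventually_nhds_iff.mp hev
  set τ := τ'/2 with hτdef
  have hτ : 0 < τ := by positivity
  obtain ⟨K, hK8, hK⟩ := exists_K (3*A + 5/τ^2 + 3560)
  refine ⟨min (3/(13*K)) (min τ (1/8)), by positivity, (min_le_right _ _).trans (min_le_right _ _), ?_⟩
  intro s hs0
  set c := min (3/(13*K)) (min τ (1/8)) with hc
  have hc1 : c ≤ 3/(13*K) := min_le_left _ _
  have hc2 : c ≤ τ := (min_le_right _ _).trans (min_le_left _ _)
  have hc3 : c ≤ 1/8 := (min_le_right _ _).trans (min_le_right _ _)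
  have hcpos : 0 < c := by positivity
  set L := Real.log (|s.im| + 3) with hL
  have hL1 : 1 ≤ L := log_abs_ge_one _
  have hcL : c / L ≤ c := div_le_self hcpos.le hL1
  have hre1 : s.re < 1 := by
    by_contra hcon
    exact zeta1_ne_zero (not_lt.mp hcon) hs0
  by_cases ht : |s.im| < τ
  · by_contra hcon
    refine hball ?_ hs0
    rw [dist_eq_norm]
    have := Complex.norm_le_abs_re_add_abs_im (s - 1)
    simp only [Complex.sub_re, Complex.sub_im, Complex.one_re, Complex.one_im, sub_zero] at this
    rw [abs_of_neg (by linarith)] at this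
    have : τ' = 2 * τ := by rw [hτdef]; ring
    linarith
  push Not at ht
  set δ := 1/(K*L) with hδdef
  have hKpos : 0 < K := by linarith
  have hLpos : 0 < L := by linarith
  have hKL : 8 ≤ K * L := by nlinarith
  have hδ : 0 < δ := by positivity
  have hδ1 : δ ≤ 1/8 := by rw [hδdef]; exact one_div_le_one_div_of_le (by norm_num) hKL
  set b := 1 + δ - s.re with hbdef
  have hb : 0 < b := by linarith
  by_cases hb4 : 1/4 < b
  · linarith
  push Not at hb4
  set t := s.im with htdef
  have h341 := three_four_one (t := t) hδ
  rw [vonMangoldt_eq_D (by simpa using hδ), vonMangoldt_eq_D (by simpa using hδ), vonMangoldt_eq_D (by simpa using hδ)] at h341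
  simp only [Complex.sub_re] at h341
  have hs2 : (1 + δ + t * Complex.I : ℂ) - b = s := by
    apply Complex.ext
    · simp [hbdef]
    · simp [htdef]
  have e1 := D_lower_zero (s := (1 + δ + t * Complex.I : ℂ)) hδ (by linarith) (by simp) hb hb4 (by rw [hs2]; exact hs0)
  have e2 := D_lower (s := (1 + δ + (2*t : ℝ) * Complex.I : ℂ)) hδ (by linarith) (by simp)
  have e3 := hAb (1+δ) (by linarith) (by linarith)
  have e4 := re_inv_le hδ hτ ht
  have e5 := re_inv_le hδ hτ (t := 2*t) (by rw [abs_mul, abs_two]; linarith)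
  have e6 : (1 / ((1 + δ : ℂ) - 1)).re = K * L := by
    rw [add_sub_cancel_left, hδdef]; norm_cast; rw [one_div_one_div]
  have e3' : -A ≤ (deriv riemannZeta₁ (1+δ) / riemannZeta₁ (1+δ)).re := by
    have := (Complex.abs_re_le_norm _).trans e3
    push_cast at this
    exact (abs_le.mp this).1
  have i1 : (1 + δ + t * Complex.I : ℂ).im = t := by simp
  have i2 : (1 + δ + (2*t : ℝ) * Complex.I : ℂ).im = 2*t := by simp
  rw [i1, ← hL] at e1
  rw [i2] at e2
  have hlogδ : Real.log (1/δ) ≤ Real.log K + L := by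
    rw [hδdef, one_div_one_div, Real.log_mul hKpos.ne' hLpos.ne']
    linarith [Real.log_le_sub_one_of_pos hLpos]
  have hlog2 : Real.log (|2*t|+3) ≤ L + 1 := by
    have h2e : 2 ≤ Real.exp 1 := by linarith [Real.exp_one_gt_d9]
    have : Real.log (|2*t|+3) ≤ Real.log ((|t|+3) * Real.exp 1) := by
      apply Real.log_le_log (by positivity)
      rw [abs_mul, abs_two]
      nlinarith [abs_nonneg t]
    rwa [Real.log_mul (by positivity) (Real.exp_pos 1).ne', Real.log_exp] at this
  have hδτ : δ/τ^2 ≤ 1/τ^2 := by gcongr; linarith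
  have hlogK : 0 ≤ Real.log K := Real.log_nonneg (by linarith)
  have key : 4 * (1/b) ≤ 13/4 * K * L := by
    have hAA : 0 ≤ (3*A + 5/τ^2 + 200 + 960 * Real.log K) := by positivity
    have : 4 * (1/b) ≤ 3*(K*L) + 3360 * L + (3*A + 5/τ^2 + 200 + 960 * Real.log K) := by
      have : 5/τ^2 = 5*(1/τ^2) := by ring
      rw [this]
      rw [e6] at h341
      linarith
    have h7 : (3*A + 5/τ^2 + 200 + 960 * Real.log K) ≤ (3*A + 5/τ^2 + 200 + 960 * Real.log K) * L :=
      le_mul_of_one_le_right hAA hL1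
    nlinarith
  have hb2 : 16 / (13 * K * L) ≤ b := by
    rw [div_le_iff₀ (by positivity)]
    rw [← mul_div_assoc, mul_one, div_le_iff₀ hb] at key
    linarith
  have : c / L ≤ 3/(13*K) / L := by gcongr
  have h8 : 3/(13*K)/L = 16/(13*K*L) - δ := by rw [hδdef]; field_simp; norm_num
  linarith

open Metric in
theorem D_region : ∃ c A : ℝ, 0 < c ∧ c ≤ 1/8 ∧ 0 < A ∧ ∀ T : ℝ, 1 ≤ T → ∀ s : ℂ, |s.im| ≤ T →
    1 - c / Real.log (T + 4) ≤ s.re → s.re ≤ 1 + 3 * (c / Real.log (T+4)) →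
    riemannZeta₁ s ≠ 0 ∧ ‖deriv riemannZeta₁ s / riemannZeta₁ s‖ ≤ A * Real.log (T+4)^2 := by
  obtain ⟨c0, hc0, hc08, hzf⟩ := zero_free
  set c := c0/4 with hc
  have hcpos : 0 < c := by positivity
  have hlc : 0 ≤ Real.log (1/c) := Real.log_nonneg (by rw [le_div_iff₀ hcpos]; linarith)
  refine ⟨c, 6 * (7 + 2 * Real.log (1/c)) / c, hcpos, by linarith, by positivity, ?_⟩
  intro T hT s him hre1 hre2
  set L := Real.log (T+4) with hL
  have hL1 : 1 ≤ L := by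
    rw [hL, Real.le_log_iff_exp_le (by positivity)]
    linarith [Real.exp_one_lt_d9]
  have hLpos : 0 < L := by linarith
  set η := c / L with hη
  have hηpos : 0 < η := by positivity
  have hηc : η ≤ c := div_le_self hcpos.le hL1
  have hnv : ∀ w : ℂ, |w.im| ≤ T + 1 → 1 - 4 * η < w.re → riemannZeta₁ w ≠ 0 := by
    intro w hw1 hw2 h0
    have h1 := hzf w h0
    have h2 : Real.log (|w.im|+3) ≤ L := Real.log_le_log (by positivity) (by linarith)
    have h3 : 0 < Real.log (|w.im|+3) := by linarith [log_abs_ge_one w.im]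
    have h4 : c0 / L ≤ c0 / Real.log (|w.im|+3) := by gcongr
    have h5 : 4 * η = c0 / L := by rw [hη, hc]; ring
    linarith
  refine ⟨hnv s (by linarith) (by linarith), ?_⟩
  set s0 : ℂ := 1 + η + s.im * Complex.I with hs0
  have hs0re : s0.re = 1 + η := by simp [hs0]
  have hs0im : s0.im = s.im := by simp [hs0]
  have hM := zeta1_M_pos (t := s0.im) hηpos (by linarith)
  have hz : s = s0 + ((s.re - (1 + η) : ℝ) : ℂ) := by
    apply Complex.ext
    · simp [hs0]
    · simp [hs0]
  have hbc := bc_logDeriv0 (h := fun z => riemannZeta₁ (s0 + z)) (ρ := 4 * η) (by positivity) hM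
    (Differentiable.differentiableOn (differentiable_riemannZeta₁.comp (differentiable_id.const_add s0)))
    (by
      intro z hz
      rw [mem_ball_zero_iff] at hz
      have h1 := (Complex.abs_re_le_norm z).trans_lt hz
      have h2 := (Complex.abs_im_le_norm z).trans_lt hz
      apply hnv
      · rw [Complex.add_im, hs0im]
        linarith [abs_add_le s.im z.im]
      · rw [Complex.add_re, hs0re]; linarith [(abs_lt.mp h1).1])
    (by
      intro z hz
      rw [mem_ball_zero_iff] at hz
      simpa using zeta1_ratio hηpos (by linarith) hs0re (z := z) (by linarith))
    (z := ((s.re - (1 + η) : ℝ) : ℂ))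
    (by
      rw [Complex.norm_real, Real.norm_eq_abs, abs_le]
      constructor <;> linarith)
  rw [deriv_comp_const_add, ← hz] at hbc
  refine hbc.trans ?_
  rw [hs0im]
  have hM2 : 2 * Real.log (|s.im| + 3) + 3 + 2 * Real.log (1/η) ≤ (7 + 2 * Real.log (1/c)) * L := by
    have h1 : Real.log (|s.im|+3) ≤ L := Real.log_le_log (by positivity) (by linarith)
    have h2 : Real.log (1/η) = Real.log (1/c) + Real.log L := by
      rw [← Real.log_mul (by positivity) hLpos.ne', hη]; congr 1; field_simp
    have h3 := Real.log_le_sub_one_of_pos hLpos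
    rw [h2]
    nlinarith
  calc 24 * (2 * Real.log (|s.im| + 3) + 3 + 2 * Real.log (1/η)) / (4*η)
      ≤ 24 * ((7 + 2 * Real.log (1/c)) * L) / (4*η) := by gcongr
    _ = 6 * (7 + 2 * Real.log (1/c)) / c * L^2 := by rw [hη]; field_simp; ring

noncomputable def kern (t : ℝ) : ℂ :=
  (Set.Ioc (0:ℝ) 1).indicator (fun _ => (1:ℂ)) t - (Set.Ioc (0:ℝ) 1).indicator (fun t : ℝ => (t:ℂ) ^ (1:ℂ)) t

theorem kern_eq {t : ℝ} (ht : 0 < t) : kern t = ((max 0 (1 - t) : ℝ) : ℂ) := by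
  unfold kern
  by_cases h : t ≤ 1
  · have : t ∈ Set.Ioc (0:ℝ) 1 := ⟨ht, h⟩
    rw [Set.indicator_of_mem this, Set.indicator_of_mem this, max_eq_right (by linarith)]
    simp
  · have : t ∉ Set.Ioc (0:ℝ) 1 := fun hh => h hh.2
    rw [Set.indicator_of_notMem this, Set.indicator_of_notMem this, max_eq_left (by linarith)]
    simp

theorem kern_mellin {s : ℂ} (hs : 0 < s.re) : HasMellin kern s (1 / (s * (s+1))) := by
  have h1 := hasMellin_one_Ioc hs
  have h2 := hasMellin_cpow_Ioc 1 (s := s) (by simp; linarith)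
  have h3 := hasMellin_sub h1.1 h2.1
  rw [h1.2, h2.2] at h3
  have hs0 : s ≠ 0 := by rintro rfl; simp at hs
  have hs1 : s + 1 ≠ 0 := by
    intro h
    have := congrArg Complex.re h
    simp at this; linarith
  have : 1 / (s * (s+1)) = 1 / s - 1 / (s+1) := by field_simp; ring
  rw [this]
  exact h3

theorem K_norm_le {σ t : ℝ} (hσ : 1 ≤ σ) :
    ‖1 / ((σ + t * Complex.I : ℂ) * ((σ + t * Complex.I : ℂ) + 1))‖ ≤ (1 + t^2)⁻¹ := by
  have key : ∀ u : ℝ, 1 ≤ u → Real.sqrt (1 + t^2) ≤ ‖(u + t * Complex.I : ℂ)‖ := by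
    intro u hu
    rw [Complex.norm_add_mul_I]
    apply Real.sqrt_le_sqrt
    nlinarith
  have h1 := key σ hσ
  have h2 := key (σ+1) (by linarith)
  have h3 : ((σ + t * Complex.I : ℂ) + 1) = ((σ + 1 : ℝ) + t * Complex.I : ℂ) := by push_cast; ring
  rw [h3, norm_div, norm_one, norm_mul, one_div]
  have hp : 0 < Real.sqrt (1+t^2) := by positivity
  apply inv_anti₀ (by positivity)
  calc 1 + t^2 = Real.sqrt (1+t^2) * Real.sqrt (1+t^2) := (Real.mul_self_sqrt (by positivity)).symm
    _ ≤ _ := by gcongr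

theorem line_ne {σ t : ℝ} (hσ : 1 ≤ σ) :
    (σ + t * Complex.I : ℂ) * ((σ + t * Complex.I : ℂ) + 1) ≠ 0 := by
  apply mul_ne_zero
  · intro h; have := congrArg Complex.re h; simp at this; linarith
  · intro h; have := congrArg Complex.re h; simp at this; linarith

theorem K_cont {σ : ℝ} (hσ : 1 ≤ σ) :
    Continuous (fun t : ℝ => 1 / ((σ + t * Complex.I : ℂ) * ((σ + t * Complex.I : ℂ) + 1))) := by
  apply Continuous.div continuous_const (by fun_prop)
  intro t; exact line_ne hσ

theorem K_integrable {σ : ℝ} (hσ : 1 ≤ σ) :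
    MeasureTheory.Integrable (fun t : ℝ => 1 / ((σ + t * Complex.I : ℂ) * ((σ + t * Complex.I : ℂ) + 1))) :=
  integrable_inv_one_add_sq.mono' (K_cont hσ).aestronglyMeasurable
    (Filter.Eventually.of_forall fun _ => K_norm_le hσ)

theorem kern_inv {σ y : ℝ} (hσ : 1 ≤ σ) (hy : 0 < y) :
    ((max 0 (1 - y) : ℝ) : ℂ) = (1 / (2 * Real.pi) : ℝ) •
      ∫ t : ℝ, (y:ℂ) ^ (-(σ + t * Complex.I : ℂ)) * (1 / ((σ + t * Complex.I : ℂ) * ((σ + t * Complex.I : ℂ) + 1))) := by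
  have hm : ∀ t : ℝ, mellin kern (σ + t * Complex.I) = 1 / ((σ + t * Complex.I : ℂ) * ((σ + t * Complex.I : ℂ) + 1)) :=
    fun t => (kern_mellin (by simp; linarith)).2
  have h := mellinInv_mellin_eq σ kern hy (kern_mellin (by simp; linarith)).1
    (by
      unfold Complex.VerticalIntegrable
      simp only [hm]
      exact K_integrable hσ)
    (by
      have hc : ContinuousAt (fun t : ℝ => ((max 0 (1 - t) : ℝ) : ℂ)) y := by fun_prop
      refine hc.congr ?_
      filter_upwards [lt_mem_nhds hy] with t ht
      exact (kern_eq ht).symm)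
  rw [kern_eq hy] at h
  rw [← h]
  unfold mellinInv
  simp only [hm, smul_eq_mul]

theorem norm_term_line {a : ℕ → ℂ} {σ t : ℝ} {n : ℕ} :
    ‖LSeries.term a (σ + t * Complex.I) n‖ = ‖LSeries.term a σ n‖ := by
  rw [LSeries.norm_term_eq, LSeries.norm_term_eq]
  simp

theorem perron {a : ℕ → ℂ} (ha0 : a 0 = 0) {σ x : ℝ} (hσ : 1 ≤ σ) (hx : 0 < x) (ha : LSeriesSummable a σ) :
    HasSum (fun n : ℕ => a n * ((max 0 (1 - n / x) : ℝ) : ℂ))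
      ((1 / (2 * Real.pi) : ℝ) • ∫ t : ℝ, LSeries a (σ + t * Complex.I) *
        ((x:ℂ) ^ (σ + t * Complex.I : ℂ) * (1 / ((σ + t * Complex.I : ℂ) * ((σ + t * Complex.I : ℂ) + 1))))) := by
  have hxc : (x:ℂ) ≠ 0 := by exact_mod_cast hx.ne'
  set K : ℝ → ℂ := fun t => 1 / ((σ + t * Complex.I : ℂ) * ((σ + t * Complex.I : ℂ) + 1)) with hK
  set F : ℕ → ℝ → ℂ := fun n t => LSeries.term a (σ + t * Complex.I) n * ((x:ℂ) ^ (σ + t * Complex.I : ℂ) * K t) with hF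
  have hxn : ∀ t : ℝ, ‖(x:ℂ) ^ (σ + t * Complex.I : ℂ)‖ = x ^ σ := by
    intro t; rw [Complex.norm_cpow_eq_rpow_re_of_pos hx]; simp
  have hFn : ∀ n t, ‖F n t‖ = ‖LSeries.term a σ n‖ * (x^σ * ‖K t‖) := by
    intro n t
    simp only [hF, norm_mul, norm_term_line, hxn]
  have hcont : ∀ n, Continuous (F n) := by
    intro n
    apply Continuous.mul
    · rcases Nat.eq_zero_or_pos n with rfl | hn
      · simp only [LSeries.term_zero]; exact continuous_const
      · simp only [LSeries.term_of_ne_zero hn.ne']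
        have hnc : (n:ℂ) ≠ 0 := by exact_mod_cast hn.ne'
        apply Continuous.div continuous_const
        · exact Continuous.const_cpow (by fun_prop) (Or.inl hnc)
        · intro t; simp [Complex.cpow_eq_zero_iff, hnc]
    · exact (Continuous.const_cpow (by fun_prop) (Or.inl hxc)).mul (K_cont hσ)
  have hInt : ∀ n, MeasureTheory.Integrable (F n) := by
    intro n
    refine (((K_integrable hσ).norm.const_mul (x^σ)).const_mul ‖LSeries.term a σ n‖).mono' (hcont n).aestronglyMeasurable ?_
    exact Filter.Eventually.of_forall fun t => (hFn n t).le
  have hsum : Summable fun n => ∫ t, ‖F n t‖ := by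
    simp only [hFn, MeasureTheory.integral_const_mul]
    exact ha.norm.mul_right _
  have hS := MeasureTheory.hasSum_integral_of_summable_integral_norm hInt hsum
  have hS2 := hS.const_smul (1 / (2 * Real.pi) : ℝ)
  have hR : ∀ t : ℝ, ∑' n, F n t = LSeries a (σ + t * Complex.I) * ((x:ℂ) ^ (σ + t * Complex.I : ℂ) * K t) := by
    intro t
    simp only [hF]
    rw [tsum_mul_right]; rfl
  simp only [hR] at hS2
  refine Eq.subst (motive := fun f => HasSum f _) (funext fun n => ?_) hS2
  symm
  rcases Nat.eq_zero_or_pos n with rfl | hn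
  · simp [hF, ha0]
  · have hnr : (0:ℝ) < n := by exact_mod_cast hn
    have hnc : (n:ℂ) ≠ 0 := by exact_mod_cast hn.ne'
    rw [kern_inv hσ (div_pos hnr hx), mul_smul_comm, ← MeasureTheory.integral_const_mul]
    congr 1
    congr 1
    ext t
    simp only [hF, LSeries.term_of_ne_zero hn.ne']
    have : ((n / x : ℝ) : ℂ) ^ (-(σ + t * Complex.I : ℂ)) = (x:ℂ)^(σ + t * Complex.I : ℂ) / (n:ℂ)^(σ + t * Complex.I : ℂ) := by
      have hq : ((n / x : ℝ) : ℂ) ≠ 0 := by exact_mod_cast (div_pos hnr hx).ne'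
      rw [Complex.cpow_def_of_ne_zero hq, Complex.cpow_def_of_ne_zero hxc, Complex.cpow_def_of_ne_zero hnc,
        ← Complex.exp_sub, ← Complex.ofReal_log (div_pos hnr hx).le, ← Complex.ofReal_log hx.le,
        ← Complex.natCast_log, Real.log_div hnr.ne' hx.ne']
      congr 1; push_cast; ring
    rw [this]
    simp only [hK]
    ring

noncomputable def aC (n : ℕ) : ℂ := if n = 0 then 0 else ((ArithmeticFunction.vonMangoldt n : ℝ) : ℂ) - 1

theorem aC_summable {s : ℂ} (hs : 1 < s.re) : LSeriesSummable aC s := by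
  refine (LSeriesSummable_congr s ?_).mpr ((ArithmeticFunction.LSeriesSummable_vonMangoldt hs).sub (LSeriesSummable_one_iff.mpr hs))
  intro n hn
  simp [aC, hn]

theorem aC_LSeries {s : ℂ} (hs : 1 < s.re) :
    LSeries aC s = -(deriv riemannZeta₁ s / riemannZeta₁ s) - riemannZeta₀ s := by
  have h1 : LSeries aC s = LSeries ((fun n => ((ArithmeticFunction.vonMangoldt n : ℝ) : ℂ)) - 1) s := by
    apply LSeries_congr
    intro n hn
    simp [aC, hn]
  have hs1 : s ≠ 1 := by rintro rfl; simp at hs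
  rw [h1, LSeries_sub (ArithmeticFunction.LSeriesSummable_vonMangoldt hs) (LSeriesSummable_one_iff.mpr hs),
    vonMangoldt_eq_D hs, LSeries_one_eq_riemannZeta hs, riemannZeta_eq_inv_sub_add hs1]
  ring

theorem aC_bound : ∃ B : ℝ, 0 < B ∧ ∀ σ t : ℝ, 1 < σ → σ ≤ 2 → ‖LSeries aC (σ + t * Complex.I)‖ ≤ 2 / (σ - 1) + B := by
  obtain ⟨A, hA, hAb⟩ := D_real_bound
  refine ⟨A + 5, by positivity, ?_⟩
  intro σ t hσ hσ2
  have hσc : 1 < ((σ:ℝ):ℂ).re := by simpa using hσ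
  have hsc : 1 < (σ + t * Complex.I : ℂ).re := by simpa using hσ
  have hσ1 : (σ:ℂ) ≠ 1 := by
    intro h; rw [h] at hσc; simp at hσc
  have h1 := (ArithmeticFunction.LSeriesSummable_vonMangoldt hσc).hasSum
  have h2 := (LSeriesHasSum_one hσc)
  rw [LSeriesHasSum] at h2
  have h3 := Complex.hasSum_re (h1.add h2)
  have hle : ∀ n, ‖LSeries.term aC (σ + t * Complex.I) n‖ ≤
      (LSeries.term (fun n => ((ArithmeticFunction.vonMangoldt n : ℝ) : ℂ)) σ n + LSeries.term 1 σ n).re := by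
    intro n
    rcases Nat.eq_zero_or_pos n with rfl | hn
    · simp
    have hnr : (0:ℝ) < n := by exact_mod_cast hn
    rw [norm_term_line, LSeries.term_of_ne_zero hn.ne', LSeries.term_of_ne_zero hn.ne', LSeries.term_of_ne_zero hn.ne']
    have : (n:ℂ) ^ (σ : ℂ) = (((n:ℝ)^σ : ℝ) : ℂ) := by
      rw [Complex.ofReal_cpow hnr.le]; simp
    rw [this, ← add_div, norm_div, Complex.norm_real, Real.norm_eq_abs, abs_of_pos (by positivity)]
    have h5 : (((ArithmeticFunction.vonMangoldt n : ℝ) : ℂ) + (1 : ℕ → ℂ) n) / (((n:ℝ)^σ : ℝ) : ℂ)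
        = (((ArithmeticFunction.vonMangoldt n + 1) / (n:ℝ)^σ : ℝ) : ℂ) := by
      push_cast; simp
    rw [h5, Complex.ofReal_re]
    gcongr
    simp only [aC, hn.ne', if_false]
    have h6 : ((ArithmeticFunction.vonMangoldt n : ℝ) : ℂ) - 1 = ((ArithmeticFunction.vonMangoldt n - 1 : ℝ) : ℂ) := by push_cast; rfl
    rw [h6, Complex.norm_real, Real.norm_eq_abs, abs_le]
    constructor <;> linarith [ArithmeticFunction.vonMangoldt_nonneg (n := n)]
  have h4 : ‖LSeries aC (σ + t * Complex.I)‖ ≤ (∑' n, LSeries.term (fun n => ((ArithmeticFunction.vonMangoldt n : ℝ) : ℂ)) σ n + riemannZeta σ).re := by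
    rw [LSeries, ← h3.tsum_eq]
    refine (norm_tsum_le_tsum_norm (aC_summable hsc).norm).trans ?_
    exact (aC_summable hsc).norm.tsum_le_tsum hle h3.summable
  refine h4.trans ((Complex.re_le_norm _).trans ?_)
  have h7 : ∑' n, LSeries.term (fun n => ((ArithmeticFunction.vonMangoldt n : ℝ) : ℂ)) σ n = 1 / ((σ:ℂ) - 1) - deriv riemannZeta₁ σ / riemannZeta₁ σ :=
    vonMangoldt_eq_D hσc
  rw [h7, riemannZeta_eq_inv_sub_add hσ1]
  have h8 : ‖(1:ℂ) / ((σ:ℂ) - 1)‖ = 1 / (σ - 1) := by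
    rw [norm_div, norm_one, ← Complex.ofReal_one, ← Complex.ofReal_sub, Complex.norm_real, Real.norm_eq_abs, abs_of_pos (by linarith)]
  have h9 : ‖((σ:ℂ) - 1)⁻¹‖ = 1 / (σ - 1) := by rw [← one_div]; exact h8
  have h10 := zeta0_bound (s := σ) (by simp; linarith)
  rw [Complex.norm_real, Real.norm_eq_abs, abs_of_pos (by linarith)] at h10
  have h11 := hAb σ hσ.le hσ2
  have h12 := norm_add_le ((1:ℂ) / ((σ:ℂ) - 1) - deriv riemannZeta₁ σ / riemannZeta₁ σ) (((σ:ℂ) - 1)⁻¹ + riemannZeta₀ σ)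
  have h13 := norm_sub_le ((1:ℂ) / ((σ:ℂ) - 1)) (deriv riemannZeta₁ σ / riemannZeta₁ σ)
  have h14 := norm_add_le (((σ:ℂ) - 1)⁻¹) (riemannZeta₀ σ)
  have h15 : 2 / (σ-1) = 1/(σ-1) + 1/(σ-1) := by ring
  linarith

theorem arctan_le_self' {y : ℝ} (hy : 0 ≤ y) : Real.arctan y ≤ y := by
  have h1 := Real.le_tan (Real.arctan_nonneg.mpr hy) (Real.arctan_lt_pi_div_two y)
  rwa [Real.tan_arctan] at h1

open MeasureTheory in
theorem tail_bound {f : ℝ → ℂ} {Q T : ℝ} (hT : 0 < T) (hf : Integrable f) (hQ : 0 ≤ Q)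
    (hb : ∀ t, ‖f t‖ ≤ Q * (1 + t^2)⁻¹) :
    ‖(∫ t, f t) - ∫ t in (-T)..T, f t‖ ≤ 2 * Q / T := by
  have e1 := intervalIntegral.integral_Iic_add_Ioi (b := T) hf.integrableOn hf.integrableOn
  have e2 := intervalIntegral.integral_Iic_sub_Iic (a := -T) (b := T) (f := f) (μ := volume) hf.integrableOn hf.integrableOn
  have e3 : (∫ t, f t) - ∫ t in (-T)..T, f t = (∫ t in Set.Iic (-T), f t) + ∫ t in Set.Ioi T, f t := by
    rw [← e1, ← e2]; ring
  have harc := arctan_le_self' (y := T⁻¹) (by positivity)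
  rw [Real.arctan_inv_of_pos hT] at harc
  have hg : Integrable (fun t : ℝ => Q * (1 + t^2)⁻¹) := integrable_inv_one_add_sq.const_mul Q
  have b1 : ‖∫ t in Set.Iic (-T), f t‖ ≤ Q * T⁻¹ := by
    refine (norm_integral_le_of_norm_le hg.integrableOn (Filter.Eventually.of_forall hb)).trans ?_
    rw [integral_const_mul, integral_Iic_inv_one_add_sq, Real.arctan_neg]
    gcongr; linarith
  have b2 : ‖∫ t in Set.Ioi T, f t‖ ≤ Q * T⁻¹ := by
    refine (norm_integral_le_of_norm_le hg.integrableOn (Filter.Eventually.of_forall hb)).trans ?_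
    rw [integral_const_mul, integral_Ioi_inv_one_add_sq]
    gcongr
  rw [e3]
  refine (norm_add_le _ _).trans ?_
  have : 2 * Q / T = Q * T⁻¹ + Q * T⁻¹ := by ring
  linarith

noncomputable def GG (x : ℝ) (s : ℂ) : ℂ :=
  (-(deriv riemannZeta₁ s / riemannZeta₁ s) - riemannZeta₀ s) * ((x:ℂ) ^ s * (1 / (s * (s+1))))

theorem GG_bound {x D : ℝ} {s : ℂ} (hx : 0 < x) (hs : 1/2 ≤ s.re) (hD : ‖deriv riemannZeta₁ s / riemannZeta₁ s‖ ≤ D) :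
    ‖GG x s‖ ≤ x ^ s.re * (2 * D + 4) ∧ (1 ≤ |s.im| → ‖GG x s‖ ≤ x ^ s.re * ((D + 3) / |s.im|)) := by
  have h0 := zeta0_bound hs
  have hD0 : 0 ≤ D := (norm_nonneg _).trans hD
  have h1 : ‖-(deriv riemannZeta₁ s / riemannZeta₁ s) - riemannZeta₀ s‖ ≤ D + 1 + 2 * ‖s‖ := by
    refine (norm_sub_le _ _).trans ?_
    rw [norm_neg]; linarith
  have hxn : ‖(x:ℂ) ^ s‖ = x ^ s.re := Complex.norm_cpow_eq_rpow_re_of_pos hx s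
  have hn1 : 1/2 ≤ ‖s‖ := hs.trans (Complex.re_le_norm s)
  have hn2 : 1 ≤ ‖s + 1‖ := by
    have := Complex.re_le_norm (s+1)
    simp only [Complex.add_re, Complex.one_re] at this
    linarith
  have heq : ‖GG x s‖ = x ^ s.re * (‖-(deriv riemannZeta₁ s / riemannZeta₁ s) - riemannZeta₀ s‖ / (‖s‖ * ‖s+1‖)) := by
    unfold GG
    rw [norm_mul, norm_mul, hxn, norm_div, norm_one, norm_mul]; ring
  have hp : 0 < ‖s‖ := by linarith
  have hp2 : 0 < ‖s + 1‖ := by linarith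
  rw [heq]
  constructor
  · gcongr
    rw [div_le_iff₀ (by positivity)]
    refine h1.trans ?_
    nlinarith [mul_nonneg hD0 (by linarith : 0 ≤ ‖s‖ - 1/2), mul_nonneg hp.le (by linarith : 0 ≤ ‖s+1‖ - 1),
      mul_nonneg hD0 (mul_nonneg hp.le (by linarith : 0 ≤ ‖s+1‖ - 1))]
  · intro him
    have hi1 : |s.im| ≤ ‖s‖ := Complex.abs_im_le_norm s
    have hi2 : |s.im| ≤ ‖s+1‖ := by simpa using Complex.abs_im_le_norm (s+1)
    have hipos : 0 < |s.im| := by linarith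
    refine mul_le_mul_of_nonneg_left ?_ (by positivity)
    rw [div_le_div_iff₀ (by positivity) hipos]
    have e1 : |s.im| ≤ ‖s‖ * ‖s+1‖ := by nlinarith
    have e2 : ‖s‖ * |s.im| ≤ ‖s‖ * ‖s+1‖ := by gcongr
    calc _ ≤ (D + 1 + 2 * ‖s‖) * |s.im| := by gcongr
      _ = (D+1) * |s.im| + 2 * (‖s‖ * |s.im|) := by ring
      _ ≤ (D+1) * (‖s‖ * ‖s+1‖) + 2 * (‖s‖ * ‖s+1‖) := by gcongr
      _ = _ := by ring

theorem rect_bound {x T η D σ : ℝ} (hx : 1 ≤ x) (hT : 1 ≤ T) (hη : 0 < η) (hη2 : η ≤ 1/8) (hσ : 1 < σ)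
    (hσ2 : σ ≤ 1 + 3 * η)
    (hreg : ∀ s : ℂ, |s.im| ≤ T → 1 - η ≤ s.re → s.re ≤ 1 + 3 * η →
      riemannZeta₁ s ≠ 0 ∧ ‖deriv riemannZeta₁ s / riemannZeta₁ s‖ ≤ D) :
    ‖∫ t in (-T)..T, GG x (σ + t * Complex.I)‖ ≤
      x ^ (1-η) * (2 * D + 4) * (2 * T) + 2 * (x ^ σ * ((D+3)/T)) := by
  have hx0 : 0 < x := by linarith
  have hxc : (x:ℂ) ≠ 0 := by exact_mod_cast hx0.ne'
  have hD0 : 0 ≤ D := (norm_nonneg _).trans (hreg 1 (by simp; linarith) (by simp; linarith) (by simp; linarith)).2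
  have hdiff : DifferentiableOn ℂ (GG x) (Set.uIcc (1-η) σ ×ℂ Set.uIcc (-T) T) := by
    intro s hs
    rw [Set.uIcc_of_le (by linarith), Set.uIcc_of_le (by linarith)] at hs
    obtain ⟨hs1, hs2⟩ := Complex.mem_reProdIm.mp hs
    have hne := (hreg s (abs_le.mpr hs2) hs1.1 (hs1.2.trans hσ2)).1
    apply DifferentiableAt.differentiableWithinAt
    unfold GG
    apply DifferentiableAt.mul
    · apply DifferentiableAt.sub
      · apply DifferentiableAt.neg
        apply DifferentiableAt.div _ (differentiable_riemannZeta₁ s) hne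
        exact (differentiable_riemannZeta₁.contDiff (n := 2)).differentiable_deriv_two s
      · exact differentiable_riemannZeta₀ s
    · apply DifferentiableAt.mul
      · exact DifferentiableAt.const_cpow differentiableAt_id (Or.inl hxc)
      · apply DifferentiableAt.div (by fun_prop) (by fun_prop)
        apply mul_ne_zero
        · intro h; have := congrArg Complex.re h; simp at this; linarith [hs1.1]
        · intro h; have := congrArg Complex.re h; simp at this; linarith [hs1.1]
  have hrect := Complex.integral_boundary_rect_eq_zero_of_differentiableOn (GG x)
    (((1-η : ℝ) : ℂ) + ((-T : ℝ) : ℂ) * Complex.I) (((σ : ℝ) : ℂ) + ((T : ℝ) : ℂ) * Complex.I)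
    (by simpa using hdiff)
  have r1 : (((1-η : ℝ) : ℂ) + ((-T : ℝ) : ℂ) * Complex.I).re = 1-η := by simp
  have r2 : (((1-η : ℝ) : ℂ) + ((-T : ℝ) : ℂ) * Complex.I).im = -T := by simp
  have r3 : (((σ : ℝ) : ℂ) + ((T : ℝ) : ℂ) * Complex.I).re = σ := by simp
  have r4 : (((σ : ℝ) : ℂ) + ((T : ℝ) : ℂ) * Complex.I).im = T := by simp
  rw [r1, r2, r3, r4] at hrect
  set V := ∫ t in (-T)..T, GG x (σ + t * Complex.I) with hV
  set V' := ∫ t in (-T)..T, GG x (((1-η:ℝ):ℂ) + t * Complex.I) with hV'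
  set H1 := ∫ u in (1-η)..σ, GG x (u + ((-T:ℝ):ℂ) * Complex.I) with hH1
  set H2 := ∫ u in (1-η)..σ, GG x (u + (T:ℂ) * Complex.I) with hH2
  have hI : Complex.I • V = Complex.I • V' + H2 - H1 := by linear_combination hrect
  have hnV : ‖V‖ ≤ ‖V'‖ + ‖H2‖ + ‖H1‖ := by
    have : ‖V‖ = ‖Complex.I • V‖ := by rw [norm_smul]; simp
    rw [this, hI]
    refine (norm_sub_le _ _).trans ?_
    gcongr
    refine (norm_add_le _ _).trans ?_
    rw [norm_smul]; simp
  have bV' : ‖V'‖ ≤ x ^ (1-η) * (2 * D + 4) * (2 * T) := by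
    have := intervalIntegral.norm_integral_le_of_norm_le_const (a := -T) (b := T) (C := x ^ (1-η) * (2 * D + 4))
      (f := fun t : ℝ => GG x (((1-η:ℝ):ℂ) + t * Complex.I)) (by
        intro t ht
        rw [Set.uIoc_of_le (by linarith)] at ht
        have hre : (((1-η:ℝ):ℂ) + t * Complex.I).re = 1 - η := by simp
        have him : (((1-η:ℝ):ℂ) + t * Complex.I).im = t := by simp
        have h := hreg (((1-η:ℝ):ℂ) + t * Complex.I) (by rw [him]; exact abs_le.mpr ⟨ht.1.le, ht.2⟩) (by rw [hre]) (by rw [hre]; linarith)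
        have := (GG_bound hx0 (by rw [hre]; linarith) h.2).1
        rwa [hre] at this)
    refine this.trans (le_of_eq ?_)
    rw [abs_of_pos (by linarith)]; ring
  have bH : ∀ T' : ℝ, |T'| = T → ‖∫ u in (1-η)..σ, GG x (u + (T':ℂ) * Complex.I)‖ ≤ x ^ σ * ((D+3)/T) := by
    intro T' hT'
    have := intervalIntegral.norm_integral_le_of_norm_le_const (a := 1-η) (b := σ) (C := x ^ σ * ((D+3)/T))
      (f := fun u : ℝ => GG x (u + T' * Complex.I)) (by
        intro u hu
        rw [Set.uIoc_of_le (by linarith)] at hu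
        have hre : (u + T' * Complex.I : ℂ).re = u := by simp
        have him : (u + T' * Complex.I : ℂ).im = T' := by simp
        have h := hreg (u + T' * Complex.I) (by rw [him, hT']) (by rw [hre]; linarith [hu.1]) (by rw [hre]; linarith [hu.2])
        have := (GG_bound hx0 (by rw [hre]; linarith [hu.1]) h.2).2 (by rw [him, hT']; exact hT)
        rw [hre, him, hT'] at this
        refine this.trans ?_
        have : x ^ u ≤ x ^ σ := Real.rpow_le_rpow_of_exponent_le hx hu.2
        gcongr)
    refine this.trans ?_
    rw [abs_of_pos (by linarith)]
    exact mul_le_of_le_one_right (by positivity) (by linarith)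
  have b1 := bH (-T) (by rw [abs_neg, abs_of_pos (by linarith)])
  have b2 := bH T (abs_of_pos (by linarith))
  rw [← hH1] at b1
  rw [← hH2] at b2
  linarith

theorem W_raw : ∃ c A B : ℝ, 0 < c ∧ c ≤ 1/8 ∧ 0 < A ∧ 0 < B ∧ ∀ x T σ : ℝ, 1 ≤ x → 1 ≤ T → 1 < σ →
    σ ≤ 1 + 3 * (c / Real.log (T+4)) →
    ‖∑' n : ℕ, aC n * ((max 0 (1 - n / x) : ℝ) : ℂ)‖ ≤
      x ^ (1 - c / Real.log (T+4)) * (2 * (A * Real.log (T+4)^2) + 4) * (2 * T)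
      + 2 * (x ^ σ * ((A * Real.log (T+4)^2+3)/T)) + 2 * (x ^ σ * (2 / (σ - 1) + B)) / T := by
  obtain ⟨c, A, hc, hc8, hA, hreg⟩ := D_region
  obtain ⟨B, hB, hBb⟩ := aC_bound
  refine ⟨c, A, B, hc, hc8, hA, hB, ?_⟩
  intro x T σ hx hT hσ hσ2
  have hx0 : 0 < x := by linarith
  have hxc : (x:ℂ) ≠ 0 := by exact_mod_cast hx0.ne'
  have hL1 : 1 ≤ Real.log (T+4) := by
    rw [Real.le_log_iff_exp_le (by positivity)]
    linarith [Real.exp_one_lt_d9]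
  have hηc : c / Real.log (T+4) ≤ c := div_le_self hc.le hL1
  have hη0 : 0 < c / Real.log (T+4) := by positivity
  have hP := perron (a := aC) (by simp [aC]) hσ.le hx0 (aC_summable (by simpa using hσ))
  rw [hP.tsum_eq, norm_smul]
  have hline : ∀ t : ℝ, LSeries aC (σ + t * Complex.I) *
        ((x:ℂ) ^ (σ + t * Complex.I : ℂ) * (1 / ((σ + t * Complex.I : ℂ) * ((σ + t * Complex.I : ℂ) + 1)))) = GG x (σ + t * Complex.I) := by
    intro t
    rw [aC_LSeries (by simpa using hσ)]; rfl
  have hbd : ∀ t : ℝ, ‖GG x (σ + t * Complex.I)‖ ≤ x ^ σ * (2 / (σ - 1) + B) * (1 + t^2)⁻¹ := by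
    intro t
    rw [← hline, norm_mul, norm_mul, Complex.norm_cpow_eq_rpow_re_of_pos hx0]
    have h1 := hBb σ t hσ (by linarith)
    have h2 := K_norm_le (t := t) hσ.le
    have h3 : (σ + t * Complex.I : ℂ).re = σ := by simp
    rw [h3]
    have : 0 < σ - 1 := by linarith
    calc _ ≤ (2 / (σ-1) + B) * (x ^ σ * (1+t^2)⁻¹) := by gcongr
      _ = _ := by ring
  have hcont : Continuous fun t : ℝ => GG x (σ + t * Complex.I) := by
    unfold GG
    have hl : Continuous fun t : ℝ => (σ + t * Complex.I : ℂ) := by fun_prop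
    have hc1 : Continuous (deriv riemannZeta₁) :=
        (differentiable_riemannZeta₁.contDiff (n := 1)).continuous_deriv le_rfl
    apply Continuous.mul
    · apply Continuous.sub
      · apply Continuous.neg
        apply Continuous.div (hc1.comp hl) (differentiable_riemannZeta₁.continuous.comp hl)
        intro t; exact zeta1_ne_zero (by simpa using hσ.le)
      · exact differentiable_riemannZeta₀.continuous.comp hl
    · exact (Continuous.const_cpow hl (Or.inl hxc)).mul (K_cont hσ.le)
  have hσ1 : 0 < σ - 1 := by linarith
  have hInt : MeasureTheory.Integrable fun t : ℝ => GG x (σ + t * Complex.I) :=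
    (integrable_inv_one_add_sq.const_mul _).mono' hcont.aestronglyMeasurable (Filter.Eventually.of_forall hbd)
  have ht := tail_bound (by linarith : 0 < T) hInt (by positivity) hbd
  have hr := rect_bound hx hT hη0 (by linarith) hσ hσ2 (hreg T hT)
  simp only [hline]
  have hpi : ‖(1 / (2 * Real.pi) : ℝ)‖ ≤ 1 := by
    rw [Real.norm_eq_abs, abs_of_pos (by positivity), div_le_one (by positivity)]
    linarith [Real.pi_gt_three]
  refine (mul_le_of_le_one_left (norm_nonneg _) hpi).trans ?_
  have := norm_le_norm_add_norm_sub' (∫ t : ℝ, GG x (σ + t * Complex.I)) (∫ t in (-T)..T, GG x (σ + t * Complex.I))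
  linarith

theorem W_bound : ∃ c C y0 : ℝ, 0 < c ∧ c ≤ 1 ∧ 0 < C ∧ 1 ≤ y0 ∧ ∀ x y : ℝ, y0 ≤ y → x = Real.exp (y^2) →
    ‖∑' n : ℕ, aC n * ((max 0 (1 - n / x) : ℝ) : ℂ)‖ ≤ C * (x * Real.exp (-c * y)) := by
  obtain ⟨c, A, B, hc, hc8, hA, hB, hW⟩ := W_raw
  refine ⟨c/2, (10*A + 38 + 6*B) * (8/c^2), 2/c, by positivity, by linarith, by positivity, ?_, ?_⟩
  · rw [le_div_iff₀ hc]; linarith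
  intro x y hy hxy
  have hcy : 2 ≤ c * y := by rw [div_le_iff₀ hc] at hy; linarith
  have hy1 : 1 ≤ y := by nlinarith
  have hy0 : 0 < y := by linarith
  have hx1 : 1 ≤ x := by rw [hxy]; exact Real.one_le_exp (by positivity)
  have hx0 : 0 < x := by linarith
  set T := Real.exp (c * y) with hT
  have hT3 : 3 ≤ T := by linarith [Real.add_one_le_exp (c*y)]
  set L := Real.log (T+4) with hL
  have hL1 : 1 ≤ L := by
    rw [hL, Real.le_log_iff_exp_le (by positivity)]
    linarith [Real.exp_one_lt_d9]
  have hLpos : 0 < L := by linarith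
  have hL2 : L ≤ 2 * (c * y) := by
    rw [hL, Real.log_le_iff_le_exp (by positivity), two_mul, Real.exp_add, ← hT]
    nlinarith
  have hlogx : Real.log x = y^2 := by rw [hxy, Real.log_exp]
  have hσ : 1/y^2 ≤ 3 * (c / L) := by
    rw [← mul_div_assoc, div_le_div_iff₀ (by positivity) hLpos]
    nlinarith [mul_nonneg hc.le hy0.le, mul_nonneg (mul_nonneg hc.le hy0.le) (by linarith : 0 ≤ y - 1)]
  have h := hW x T (1 + 1/y^2) hx1 (by linarith) (by have : 0 < 1/y^2 := by positivity
                                                     linarith) (by linarith)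
  rw [← hL] at h
  have hxσ : x ^ (1 + 1/y^2) ≤ 3 * x := by
    rw [Real.rpow_add hx0, Real.rpow_one, Real.rpow_def_of_pos hx0 (1/y^2), hlogx, mul_one_div_cancel (by positivity)]
    nlinarith [Real.exp_one_lt_d9]
  have hxη : x ^ (1 - c / L) ≤ x * Real.exp (-(y/2)) := by
    rw [sub_eq_add_neg, Real.rpow_add hx0, Real.rpow_one, Real.rpow_def_of_pos hx0, hlogx]
    gcongr
    have : y / 2 ≤ y^2 * (c / L) := by
      rw [← mul_div_assoc, div_le_div_iff₀ (by norm_num) hLpos]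
      nlinarith
    linarith
  have hL2' : L^2 ≤ y^2 := by
    have : L ≤ y := by nlinarith
    gcongr
  have hinvT : 1 / T = Real.exp (-c*y) := by rw [hT, one_div, ← Real.exp_neg]; congr 1; ring
  set e := Real.exp (-c*y) with he
  have hepos : 0 < e := Real.exp_pos _
  have hyy : 1 ≤ y^2 := by nlinarith
  have t1 : x ^ (1 - c / L) * (2 * (A * L^2) + 4) * (2 * T) ≤ x * e * ((4 * A + 8) * y^2) := by
    have e1 : Real.exp (-(y/2)) * T ≤ e := by
      rw [hT, he, ← Real.exp_add]
      apply Real.exp_le_exp.mpr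
      nlinarith
    calc _ ≤ (x * Real.exp (-(y/2))) * (2 * (A * y^2) + 4 * y^2) * (2 * T) := by
            gcongr; linarith
      _ = x * (Real.exp (-(y/2)) * T) * ((4 * A + 8) * y^2) := by ring
      _ ≤ _ := by gcongr
  have t2 : 2 * (x ^ (1 + 1/y^2) * ((A * L^2+3)/T)) ≤ x * e * ((6 * A + 18) * y^2) := by
    calc _ = 2 * (x ^ (1 + 1/y^2) * ((A * L^2+3) * (1/T))) := by ring
      _ ≤ 2 * (3 * x * ((A * y^2 + 3 * y^2) * e)) := by rw [hinvT]; gcongr; linarith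
      _ = _ := by ring
  have t3 : 2 * (x ^ (1 + 1/y^2) * (2 / (1 + 1/y^2 - 1) + B)) / T ≤ x * e * ((12 + 6 * B) * y^2) := by
    have : 2 / (1 + 1/y^2 - 1) = 2 * y^2 := by rw [add_sub_cancel_left]; field_simp
    rw [this]
    calc _ = 2 * (x ^ (1 + 1/y^2) * (2 * y^2 + B)) * (1/T) := by ring
      _ ≤ 2 * (3 * x * (2 * y^2 + B * y^2)) * e := by
          rw [hinvT]; gcongr
          exact le_mul_of_one_le_right hB.le hyy
      _ = _ := by ring
  have hq : e * y^2 ≤ 8/c^2 * Real.exp (-(c/2)*y) := by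
    have h1 := Real.quadratic_le_exp_of_nonneg (x := c/2*y) (by positivity)
    have h2 : y^2 ≤ 8/c^2 * Real.exp (c/2*y) := by
      rw [div_mul_eq_mul_div, le_div_iff₀ (by positivity)]
      nlinarith
    have h3 : e = Real.exp (-(c/2)*y) * Real.exp (-(c/2)*y) := by
      rw [he, ← Real.exp_add]; congr 1; ring
    have h4 : Real.exp (-(c/2)*y) * Real.exp (c/2*y) = 1 := by
      rw [← Real.exp_add]; simp
    calc e * y^2 ≤ e * (8/c^2 * Real.exp (c/2*y)) := by gcongr
      _ = 8/c^2 * Real.exp (-(c/2)*y) * (Real.exp (-(c/2)*y) * Real.exp (c/2*y)) := by rw [h3]; ring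
      _ = _ := by rw [h4, mul_one]
  calc _ ≤ x * (10*A+38+6*B) * (e * y^2) := by linarith
    _ ≤ x * (10*A+38+6*B) * (8/c^2 * Real.exp (-(c/2)*y)) := by gcongr
    _ = _ := by ring

open ArithmeticFunction in
theorem S_bound : ∃ c C x0 : ℝ, 0 < c ∧ c ≤ 1 ∧ 0 < C ∧ 1 ≤ x0 ∧ ∀ x : ℝ, x0 ≤ x → ∀ N : ℕ, x ≤ N →
    |∑ n ∈ Finset.Ioc 0 N, (vonMangoldt n - 1) * max 0 (x - n)| ≤ C * (x^2 * Real.exp (-c * Real.sqrt (Real.log x))) := by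
  obtain ⟨c, C, y0, hc, hc1, hC, hy0, hW⟩ := W_bound
  refine ⟨c, C, Real.exp (y0^2), hc, hc1, hC, Real.one_le_exp (by positivity), ?_⟩
  intro x hx N hN
  have hxpos : 0 < x := (Real.exp_pos _).trans_le hx
  have hlog : y0^2 ≤ Real.log x := by rwa [Real.le_log_iff_exp_le hxpos]
  have hy : y0 ≤ Real.sqrt (Real.log x) := Real.le_sqrt_of_sq_le hlog
  have h := hW x (Real.sqrt (Real.log x)) hy (by
    rw [Real.sq_sqrt (by nlinarith), Real.exp_log hxpos])
  have h1 : ∑' n : ℕ, aC n * ((max 0 (1 - n / x) : ℝ) : ℂ) =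
      ((∑ n ∈ Finset.Ioc 0 N, (vonMangoldt n - 1) * max 0 (1 - n / x) : ℝ) : ℂ) := by
    rw [tsum_eq_sum (s := Finset.Ioc 0 N)]
    · push_cast
      apply Finset.sum_congr rfl
      intro n hn
      have : n ≠ 0 := by have := (Finset.mem_Ioc.mp hn).1; omega
      simp [aC, this]
    · intro n hn
      rw [Finset.mem_Ioc] at hn
      by_cases h0 : n = 0
      · simp [aC, h0]
      · have hnN : N < n := by omega
        have : x ≤ n := hN.trans (by exact_mod_cast hnN.le)
        rw [max_eq_left]
        · simp
        · have : 1 ≤ n / x := by rw [le_div_iff₀ hxpos]; linarith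
          linarith
  rw [h1, Complex.norm_real, Real.norm_eq_abs] at h
  have h2 : ∑ n ∈ Finset.Ioc 0 N, (vonMangoldt n - 1) * max 0 (x - n) =
      x * ∑ n ∈ Finset.Ioc 0 N, (vonMangoldt n - 1) * max 0 (1 - n / x) := by
    rw [Finset.mul_sum]
    apply Finset.sum_congr rfl
    intro n _
    have : max 0 (x - n) = x * max 0 (1 - n / x) := by
      rw [mul_max_of_nonneg _ _ hxpos.le, mul_zero]; congr 1; field_simp
    rw [this]; ring
  rw [h2, abs_mul, abs_of_pos hxpos]
  calc _ ≤ x * (C * (x * Real.exp (-c * Real.sqrt (Real.log x)))) := by gcongr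
    _ = _ := by ring

theorem ramp {u h n : ℝ} (hh : 0 < h) :
    (if n ≤ u then (1:ℝ) else 0) ≤ (max 0 (u + h - n) - max 0 (u - n)) / h ∧
    (max 0 (u + h - n) - max 0 (u - n)) / h ≤ (if n ≤ u + h then (1:ℝ) else 0) := by
  rw [le_div_iff₀ hh, div_le_iff₀ hh]
  constructor
  · split_ifs with h1
    · rw [max_eq_right (by linarith), max_eq_right (by linarith)]; linarith
    · rw [max_eq_left (by linarith : u - n ≤ 0)]; linarith [le_max_left 0 (u+h-n)]
  · split_ifs with h1
    · rw [max_eq_right (by linarith : 0 ≤ u+h-n)]; linarith [le_max_right 0 (u-n)]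
    · rw [max_eq_left (by linarith : u+h - n ≤ 0), max_eq_left (by linarith : u - n ≤ 0)]; linarith

theorem sum_step (f : ℕ → ℝ) {z : ℝ} (hz : 0 ≤ z) {N : ℕ} (hN : z ≤ N) :
    ∑ n ∈ Finset.Ioc 0 N, f n * (if (n:ℝ) ≤ z then (1:ℝ) else 0) = ∑ n ∈ Finset.Ioc 0 ⌊z⌋₊, f n := by
  simp only [mul_ite, mul_one, mul_zero]
  rw [← Finset.sum_filter]
  apply Finset.sum_congr _ (fun _ _ => rfl)
  ext n
  simp only [Finset.mem_filter, Finset.mem_Ioc]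
  rw [Nat.le_floor_iff hz]
  constructor
  · rintro ⟨⟨h1, h2⟩, h3⟩; exact ⟨h1, h3⟩
  · rintro ⟨h1, h2⟩; exact ⟨⟨h1, by exact_mod_cast h2.trans hN⟩, h2⟩

open ArithmeticFunction in
theorem psi_bound : ∃ c C x0 : ℝ, 0 < c ∧ c ≤ 1 ∧ 0 < C ∧ 1 ≤ x0 ∧ ∀ x : ℝ, x0 ≤ x →
    |Chebyshev.psi x - x| ≤ C * (x * Real.exp (-c * Real.sqrt (Real.log x))) := by
  obtain ⟨c, C, x0, hc, hc1, hC, hx0, hS⟩ := S_bound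
  refine ⟨c/4, 8*C+2, max (2*x0) (Real.exp ((4/c)^2)), by positivity, by linarith, by positivity,
    le_max_of_le_left (by linarith), ?_⟩
  intro x hx
  have hxa : 2 * x0 ≤ x := (le_max_left _ _).trans hx
  have hxb : Real.exp ((4/c)^2) ≤ x := (le_max_right _ _).trans hx
  have hxpos : 0 < x := by linarith
  have hlog : (4/c)^2 ≤ Real.log x := by rwa [Real.le_log_iff_exp_le hxpos]
  have h4c : 4 ≤ 4/c := by rw [le_div_iff₀ hc]; linarith
  have hsq : 4/c ≤ Real.sqrt (Real.log x) := Real.le_sqrt_of_sq_le hlog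
  set y := Real.sqrt (Real.log x) with hy
  have hlog16 : 16 ≤ Real.log x := by nlinarith
  have hy2 : y^2 = Real.log x := Real.sq_sqrt (by linarith)
  set e := Real.exp (-(c/4) * y) with he
  have hepos : 0 < e := Real.exp_pos _
  have hehalf : e ≤ 1/2 := by
    have h1 : 1 ≤ c/4*y := by
      rw [div_le_iff₀ hc] at hsq; linarith
    have h2 : e * Real.exp (c/4*y) = 1 := by rw [he, ← Real.exp_add]; simp
    have h3 := Real.add_one_le_exp (c/4*y)
    nlinarith
  set h := x * e with hh
  have hhpos : 0 < h := by positivity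
  have hhx : h ≤ x/2 := by rw [hh]; nlinarith
  obtain ⟨N, hN⟩ := exists_nat_ge (2*x)
  have hSb : ∀ z, x/2 ≤ z → z ≤ 2*x →
      |∑ n ∈ Finset.Ioc 0 N, (vonMangoldt n - 1) * max 0 (z - n)| ≤ 4 * C * x^2 * e^2 := by
    intro z hz1 hz2
    have hzpos : 0 < z := by linarith
    refine (hS z (by linarith) N (by linarith)).trans ?_
    have h1 : y/2 ≤ Real.sqrt (Real.log z) := by
      apply Real.le_sqrt_of_sq_le
      have h2 : Real.log (x/2) ≤ Real.log z := Real.log_le_log (by linarith) hz1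
      rw [Real.log_div hxpos.ne' (by norm_num)] at h2
      have h3 : Real.log 2 ≤ 1 := by linarith [Real.log_two_lt_d9]
      nlinarith
    have h4 : Real.exp (-c * Real.sqrt (Real.log z)) ≤ e^2 := by
      rw [he, ← Real.exp_nat_mul]
      apply Real.exp_le_exp.mpr
      push_cast
      nlinarith
    calc _ ≤ C * ((2*x)^2 * e^2) := by gcongr
      _ = _ := by ring
  have hsplit : ∀ u : ℝ, ∑ n ∈ Finset.Ioc 0 N, vonMangoldt n * ((max 0 (u + h - n) - max 0 (u - n)) / h)
      = ∑ n ∈ Finset.Ioc 0 N, (1:ℝ) * ((max 0 (u + h - n) - max 0 (u - n)) / h)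
        + (∑ n ∈ Finset.Ioc 0 N, (vonMangoldt n - 1) * max 0 (u + h - n)
          - ∑ n ∈ Finset.Ioc 0 N, (vonMangoldt n - 1) * max 0 (u - n)) / h := by
    intro u
    rw [← Finset.sum_sub_distrib, Finset.sum_div, ← Finset.sum_add_distrib]
    apply Finset.sum_congr rfl
    intro n _
    field_simp
    ring
  have herr : 8 * C * x^2 * e^2 / h = 8 * C * h := by
    rw [hh]; field_simp
  have hone : 1 ≤ h := by
    have : h = Real.exp (Real.log x + -(c/4)*y) := by rw [Real.exp_add, Real.exp_log hxpos]
    rw [this]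
    apply Real.one_le_exp
    nlinarith
  have hpsi : Chebyshev.psi x = ∑ n ∈ Finset.Ioc 0 N, vonMangoldt n * (if (n:ℝ) ≤ x then (1:ℝ) else 0) := by
    rw [sum_step (fun n => vonMangoldt n) hxpos.le (by linarith)]; rfl
  have hup : Chebyshev.psi x ≤ x + h + 8 * C * h := by
    have h1 : Chebyshev.psi x ≤ ∑ n ∈ Finset.Ioc 0 N, vonMangoldt n * ((max 0 (x + h - n) - max 0 (x - n)) / h) := by
      rw [hpsi]
      exact Finset.sum_le_sum fun n _ => mul_le_mul_of_nonneg_left (ramp hhpos).1 vonMangoldt_nonneg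
    rw [hsplit] at h1
    have h2 : ∑ n ∈ Finset.Ioc 0 N, (1:ℝ) * ((max 0 (x + h - n) - max 0 (x - n)) / h) ≤ x + h := by
      calc _ ≤ ∑ n ∈ Finset.Ioc 0 N, (1:ℝ) * (if (n:ℝ) ≤ x + h then (1:ℝ) else 0) :=
            Finset.sum_le_sum fun n _ => mul_le_mul_of_nonneg_left (ramp hhpos).2 zero_le_one
        _ = ⌊x+h⌋₊ := by rw [sum_step (fun _ => 1) (by linarith) (by linarith)]; simp
        _ ≤ _ := Nat.floor_le (by linarith)
    have h3 := hSb (x+h) (by linarith) (by linarith)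
    have h4 := hSb x (by linarith) (by linarith)
    have h5 : (∑ n ∈ Finset.Ioc 0 N, (vonMangoldt n - 1) * max 0 (x + h - n)
          - ∑ n ∈ Finset.Ioc 0 N, (vonMangoldt n - 1) * max 0 (x - n)) / h ≤ 8 * C * x^2 * e^2 / h := by
      gcongr
      linarith [(abs_le.mp h3).2, (abs_le.mp h4).1]
    linarith
  have hlo : x - h - 1 - 8 * C * h ≤ Chebyshev.psi x := by
    have h1 : ∑ n ∈ Finset.Ioc 0 N, vonMangoldt n * ((max 0 (x - h + h - n) - max 0 (x - h - n)) / h) ≤ Chebyshev.psi x := by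
      rw [hpsi]
      refine Finset.sum_le_sum fun n _ => mul_le_mul_of_nonneg_left ?_ vonMangoldt_nonneg
      have := (ramp (u := x - h) (n := n) hhpos).2
      rwa [sub_add_cancel] at this ⊢
    rw [hsplit] at h1
    have h2 : x - h - 1 ≤ ∑ n ∈ Finset.Ioc 0 N, (1:ℝ) * ((max 0 (x - h + h - n) - max 0 (x - h - n)) / h) := by
      calc x - h - 1 ≤ ⌊x-h⌋₊ := by linarith [Nat.lt_floor_add_one (x-h)]
        _ = ∑ n ∈ Finset.Ioc 0 N, (1:ℝ) * (if (n:ℝ) ≤ x - h then (1:ℝ) else 0) := by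
            rw [sum_step (fun _ => 1) (by linarith) (by linarith)]; simp
        _ ≤ _ :=
            Finset.sum_le_sum fun n _ => mul_le_mul_of_nonneg_left (ramp hhpos).1 zero_le_one
    have h3 := hSb (x-h) (by linarith) (by linarith)
    have h4 := hSb (x-h+h) (by linarith) (by linarith)
    have h5 : -(8 * C * x^2 * e^2 / h) ≤ (∑ n ∈ Finset.Ioc 0 N, (vonMangoldt n - 1) * max 0 (x - h + h - n)
          - ∑ n ∈ Finset.Ioc 0 N, (vonMangoldt n - 1) * max 0 (x - h - n)) / h := by
      rw [← neg_div]
      gcongr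
      linarith [(abs_le.mp h3).2, (abs_le.mp h4).1]
    linarith
  rw [abs_le]
  constructor <;> nlinarith

theorem xE_ge {c x : ℝ} (hc : 0 < c) (hc1 : c ≤ 1/4) (hx : 2 ≤ x) : 1/3 ≤ x * Real.exp (-c * Real.sqrt (Real.log x)) := by
  have hl : 0 ≤ Real.log x := Real.log_nonneg (by linarith)
  have hxpos : 0 < x := by linarith
  set y := Real.sqrt (Real.log x) with hy
  have hy2 : y^2 = Real.log x := Real.sq_sqrt hl
  have : x * Real.exp (-c * y) = Real.exp (Real.log x + -c*y) := by rw [Real.exp_add, Real.exp_log hxpos]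
  rw [this]
  have := Real.add_one_le_exp (Real.log x + -c*y)
  have hy0 : 0 ≤ y := Real.sqrt_nonneg _
  nlinarith [sq_nonneg (y - 1/8), mul_nonneg hy0 (by linarith : 0 ≤ 1/4 - c)]

theorem sqrt_log_le {c x : ℝ} (hc1 : c ≤ 1/4) (hx : 1 ≤ x) :
    Real.sqrt x * Real.log x ≤ 8 * (x * Real.exp (-c * Real.sqrt (Real.log x))) := by
  have hl : 0 ≤ Real.log x := Real.log_nonneg (by linarith)
  have hxpos : 0 < x := by linarith
  set y := Real.sqrt (Real.log x) with hy
  have hy2 : y^2 = Real.log x := Real.sq_sqrt hl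
  have hy0 : 0 ≤ y := Real.sqrt_nonneg _
  have e1 : x = Real.exp (y^2) := by rw [hy2, Real.exp_log hxpos]
  have e2 : Real.sqrt x = Real.exp (y^2/2) := by
    rw [Real.sqrt_eq_iff_mul_self_eq hxpos.le (Real.exp_pos _).le, ← Real.exp_add, e1]; congr 1; ring
  rw [e2, ← hy2]
  rw [show x * Real.exp (-c*y) = Real.exp (y^2/2) * Real.exp (y^2/2 - c*y) by
    rw [← Real.exp_add]; nth_rewrite 1 [e1]; rw [← Real.exp_add]; congr 1; ring]
  have h1 : y^2 ≤ 4 * Real.exp (y^2/4) := by linarith [Real.add_one_le_exp (y^2/4)]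
  have h2 : Real.exp (y^2/4) ≤ 2 * Real.exp (y^2/2 - c*y) := by
    have : Real.exp (y^2/4) ≤ Real.exp (1/16) * Real.exp (y^2/2-c*y) := by
      rw [← Real.exp_add]
      apply Real.exp_le_exp.mpr
      nlinarith [sq_nonneg (y/2-1/4), mul_nonneg hy0 (by linarith : 0 ≤ 1/4 - c)]
    have h3 : Real.exp (1/16) ≤ 2 := by
      have := Real.exp_bound_div_one_sub_of_interval (x := 1/16) (by norm_num) (by norm_num)
      norm_num at this ⊢; linarith
    refine this.trans ?_
    gcongr
  have := Real.exp_pos (y^2/2)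
  nlinarith

theorem theta_bound : ∃ c C : ℝ, 0 < c ∧ c ≤ 1/4 ∧ 0 < C ∧ ∀ x : ℝ, 2 ≤ x →
    |Chebyshev.theta x - x| ≤ C * (x * Real.exp (-c * Real.sqrt (Real.log x))) := by
  obtain ⟨c0, C, x0, hc0, hc01, hC, hx0, h⟩ := psi_bound
  set c := c0/4 with hc
  have hcpos : 0 < c := by positivity
  have hc4 : c ≤ 1/4 := by linarith
  have hth0 := Chebyshev.theta_nonneg x0
  refine ⟨c, C + 16 + 3 * (Chebyshev.theta x0 + x0), hcpos, hc4, by positivity, ?_⟩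
  intro x hx
  have hge := xE_ge hcpos hc4 hx
  have hxE : 0 < x * Real.exp (-c * Real.sqrt (Real.log x)) := by linarith
  by_cases hxx : x0 ≤ x
  · have h1 := h x hxx
    have h2 := Chebyshev.abs_psi_sub_theta_le_sqrt_mul_log (x := x) (by linarith)
    have h3 := sqrt_log_le hc4 (x := x) (by linarith)
    have h4 : x * Real.exp (-c0 * Real.sqrt (Real.log x)) ≤ x * Real.exp (-c * Real.sqrt (Real.log x)) := by
      gcongr
      linarith
    have h5 : |Chebyshev.theta x - x| ≤ |Chebyshev.psi x - x| + |Chebyshev.psi x - Chebyshev.theta x| := by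
      rw [abs_le]
      constructor <;> linarith [abs_le.mp (le_refl |Chebyshev.psi x - x|), neg_abs_le (Chebyshev.psi x - x), le_abs_self (Chebyshev.psi x - x), neg_abs_le (Chebyshev.psi x - Chebyshev.theta x), le_abs_self (Chebyshev.psi x - Chebyshev.theta x)]
    have h6 : C * (x * Real.exp (-c0 * Real.sqrt (Real.log x))) ≤ C * (x * Real.exp (-c * Real.sqrt (Real.log x))) := by
      gcongr
      
    have h7 : 0 ≤ 3 * (Chebyshev.theta x0 + x0) * (x * Real.exp (-c * Real.sqrt (Real.log x))) := by positivity
    linarith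
  · push Not at hxx
    have h1 := Chebyshev.theta_mono hxx.le
    have h2 := Chebyshev.theta_nonneg x
    have h3 : |Chebyshev.theta x - x| ≤ Chebyshev.theta x0 + x0 := by
      rw [abs_le]; constructor <;> linarith
    have h4 : 0 ≤ C + 16 := by linarith
    nlinarith [mul_nonneg h4 hxE.le, mul_nonneg (by linarith : 0 ≤ Chebyshev.theta x0 + x0) (by linarith : 0 ≤ x * Real.exp (-c * Real.sqrt (Real.log x)) - 1/3)]

theorem log_two_le {t : ℝ} (ht : 2 ≤ t) : 0.69 ≤ Real.log t := by
  have := Real.log_le_log (by norm_num) ht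
  linarith [Real.log_two_gt_d9]

theorem log_cont : ContinuousOn (fun t : ℝ => Real.log t) (Set.Ici 2) :=
  Real.continuousOn_log.mono (fun t ht => by simp at ht ⊢; linarith)

theorem E_cont (c : ℝ) : ContinuousOn (fun t : ℝ => Real.exp (-c * Real.sqrt (Real.log t))) (Set.Ici 2) :=
  Real.continuous_exp.comp_continuousOn (continuousOn_const.mul (Real.continuous_sqrt.comp_continuousOn log_cont))

theorem Li_parts {x : ℝ} (hx : 2 ≤ x) :
    Li x = x / Real.log x - 2 / Real.log 2 + ∫ t in (2:ℝ)..x, 1 / Real.log t ^ 2 := by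
  have hi1 : IntervalIntegrable (fun t => 1 / Real.log t) MeasureTheory.volume 2 x := by
    apply ContinuousOn.intervalIntegrable
    rw [Set.uIcc_of_le hx]
    apply ContinuousOn.div continuousOn_const (log_cont.mono Set.Icc_subset_Ici_self)
    intro t ht; linarith [log_two_le ht.1]
  have hi2 : IntervalIntegrable (fun t => 1 / Real.log t ^ 2) MeasureTheory.volume 2 x :=
    Chebyshev.intervalIntegrable_one_div_log_sq (by norm_num) (by linarith)
  have h := intervalIntegral.integral_eq_sub_of_hasDerivAt (a := 2) (b := x) (f := fun t => t / Real.log t)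
    (f' := fun t => 1 / Real.log t - 1 / Real.log t ^ 2) (by
      intro t ht
      rw [Set.uIcc_of_le hx] at ht
      have hl : Real.log t ≠ 0 := by linarith [log_two_le ht.1]
      have ht0 : t ≠ 0 := by linarith [ht.1]
      have h := (hasDerivAt_id' t).div (Real.hasDerivAt_log ht0) hl
      have e : (1 * Real.log t - t * t⁻¹) / Real.log t ^ 2 = 1 / Real.log t - 1 / Real.log t ^ 2 := by
        field_simp
      rw [e] at h
      exact h) (hi1.sub hi2)
  rw [intervalIntegral.integral_sub hi1 hi2] at h
  unfold Li
  linarith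

theorem int_E {c x : ℝ} (hc : 0 < c) (hc1 : c ≤ 1/4) (hx : 2 ≤ x) :
    ∫ t in (2:ℝ)..x, Real.exp (-c * Real.sqrt (Real.log t)) ≤ 2 * (x * Real.exp (-c * Real.sqrt (Real.log x))) := by
  have hxpos : 0 < x := by linarith
  set E := Real.exp (-c * Real.sqrt (Real.log x)) with hE
  have hEpos : 0 < E := Real.exp_pos _
  have hpt : ∀ t ∈ Set.Icc 2 x, Real.exp (-c * Real.sqrt (Real.log t)) ≤ 2 * Real.sqrt x * E * (1 / (2 * Real.sqrt t)) := by
    intro t ht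
    have htpos : 0 < t := by linarith [ht.1]
    have hst : 0 < Real.sqrt t := Real.sqrt_pos.mpr htpos
    have : 2 * Real.sqrt x * E * (1 / (2 * Real.sqrt t)) = Real.sqrt x * E / Real.sqrt t := by field_simp
    rw [this, le_div_iff₀ hst]
    have key : ∀ z : ℝ, 0 < z → Real.sqrt z = Real.exp (Real.log z / 2) := by
      intro z hz
      rw [Real.sqrt_eq_iff_mul_self_eq hz.le (Real.exp_pos _).le, ← Real.exp_add, add_halves, Real.exp_log hz]
    rw [key t htpos, key x hxpos, hE, ← Real.exp_add, ← Real.exp_add]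
    apply Real.exp_le_exp.mpr
    have hl1 := log_two_le ht.1
    have hl2 : Real.log t ≤ Real.log x := Real.log_le_log htpos ht.2
    have hs1 : Real.sqrt (Real.log t) ≤ Real.sqrt (Real.log x) := Real.sqrt_le_sqrt hl2
    have hs2 : (1/2:ℝ) ≤ Real.sqrt (Real.log t) := Real.le_sqrt_of_sq_le (by norm_num at hl1 ⊢; linarith)
    have q1 : Real.sqrt (Real.log t)^2 = Real.log t := Real.sq_sqrt (by norm_num at hl1; linarith)
    have q2 : Real.sqrt (Real.log x)^2 = Real.log x := Real.sq_sqrt (by norm_num at hl1; linarith)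
    nlinarith [mul_nonneg (by linarith : 0 ≤ Real.sqrt (Real.log x) - Real.sqrt (Real.log t)) (by linarith : 0 ≤ Real.sqrt (Real.log x) + Real.sqrt (Real.log t) - 2 * c)]
  have hcs : ContinuousOn (fun t : ℝ => 1 / (2 * Real.sqrt t)) (Set.uIcc 2 x) := by
    rw [Set.uIcc_of_le hx]
    apply ContinuousOn.div continuousOn_const (by fun_prop)
    intro t ht
    have : 0 < Real.sqrt t := Real.sqrt_pos.mpr (by linarith [ht.1])
    positivity
  have hFTC := intervalIntegral.integral_eq_sub_of_hasDerivAt (a := 2) (b := x) (f := fun t => Real.sqrt t)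
    (f' := fun t => 1 / (2 * Real.sqrt t)) (by
      intro t ht
      rw [Set.uIcc_of_le hx] at ht
      exact Real.hasDerivAt_sqrt (by linarith [ht.1])) hcs.intervalIntegrable
  calc _ ≤ ∫ t in (2:ℝ)..x, 2 * Real.sqrt x * E * (1 / (2 * Real.sqrt t)) := by
        apply intervalIntegral.integral_mono_on hx _ _ hpt
        · apply ContinuousOn.intervalIntegrable
          rw [Set.uIcc_of_le hx]; exact (E_cont c).mono Set.Icc_subset_Ici_self
        · exact (hcs.intervalIntegrable).const_mul _
    _ = 2 * Real.sqrt x * E * (Real.sqrt x - Real.sqrt 2) := by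
        rw [intervalIntegral.integral_const_mul, hFTC]
    _ ≤ 2 * Real.sqrt x * E * Real.sqrt x := by
        gcongr; linarith [Real.sqrt_nonneg 2]
    _ = _ := by
        have := Real.mul_self_sqrt hxpos.le
        linear_combination 2 * E * this

theorem primePi_eq {y : ℝ} (hy : 0 ≤ y) : primePi y = Nat.primeCounting ⌊y⌋₊ := by
  unfold primePi
  rw [Nat.primeCounting, Nat.primeCounting', Nat.count_eq_card_filter_range, ← Set.ncard_coe_finset]
  congr 1
  ext p
  simp only [Set.mem_ofPred_eq, Finset.coe_filter, Finset.mem_range, Order.lt_add_one_iff, Nat.le_floor_iff hy]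
  tauto

theorem pi_bound : ∃ c C : ℝ, 0 < c ∧ c ≤ 1/4 ∧ 0 < C ∧ ∀ x : ℝ, 2 ≤ x →
    |(primePi x : ℝ) - Li x| ≤ C * (x * Real.exp (-c * Real.sqrt (Real.log x))) := by
  obtain ⟨c, C, hc, hc4, hC, hth⟩ := theta_bound
  refine ⟨c, 8 * C + 9, hc, hc4, by positivity, ?_⟩
  intro x hx
  have hxpos : 0 < x := by linarith
  have hi1 : IntervalIntegrable (fun t => Chebyshev.theta t / (t * Real.log t ^ 2)) MeasureTheory.volume 2 x := by
    rw [intervalIntegrable_iff_integrableOn_Icc_of_le hx]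
    exact Chebyshev.integrableOn_theta_div_id_mul_log_sq x
  have hi2 : IntervalIntegrable (fun t => 1 / Real.log t ^ 2) MeasureTheory.volume 2 x :=
    Chebyshev.intervalIntegrable_one_div_log_sq (by norm_num) (by linarith)
  have hpi := Chebyshev.primeCounting_eq_theta_div_log_add_integral hx
  have hIE : |(∫ t in (2:ℝ)..x, Chebyshev.theta t / (t * Real.log t ^ 2)) - ∫ t in (2:ℝ)..x, 1 / Real.log t ^ 2|
      ≤ 3 * C * (2 * (x * Real.exp (-c * Real.sqrt (Real.log x)))) := by
    rw [← intervalIntegral.integral_sub hi1 hi2, ← Real.norm_eq_abs]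
    have hbE : IntervalIntegrable (fun t => 3 * C * Real.exp (-c * Real.sqrt (Real.log t))) MeasureTheory.volume 2 x := by
      apply ContinuousOn.intervalIntegrable
      rw [Set.uIcc_of_le hx]; exact continuousOn_const.mul ((E_cont c).mono Set.Icc_subset_Ici_self)
    refine (intervalIntegral.norm_integral_le_of_norm_le hx ?_ hbE).trans ?_
    · refine Filter.Eventually.of_forall ?_
      intro t ht
      have ht2 : 2 ≤ t := ht.1.le
      have htpos : 0 < t := by linarith
      have hl := log_two_le ht2
      norm_num at hl
      have hl0 : 0 < Real.log t := by linarith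
      have : Chebyshev.theta t / (t * Real.log t ^ 2) - 1 / Real.log t ^ 2 = (Chebyshev.theta t - t) / (t * Real.log t ^ 2) := by
        field_simp
      rw [this, Real.norm_eq_abs, abs_div, abs_of_pos (by positivity : 0 < t * Real.log t ^ 2), div_le_iff₀ (by positivity)]
      refine (hth t ht2).trans ?_
      have h3 : 1 ≤ 3 * Real.log t ^ 2 := by nlinarith
      have h4 : 0 ≤ C * (t * Real.exp (-c * Real.sqrt (Real.log t))) := by positivity
      nlinarith
    · rw [intervalIntegral.integral_const_mul]
      have := int_E hc hc4 hx
      gcongr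
  have hge := xE_ge hc hc4 hx
  have hl := log_two_le hx
  have hl2 := log_two_le (le_refl (2:ℝ))
  norm_num at hl hl2
  have h1 : |Chebyshev.theta x / Real.log x - x / Real.log x| ≤ 2 * (C * (x * Real.exp (-c * Real.sqrt (Real.log x)))) := by
    rw [← sub_div, abs_div, abs_of_pos (by linarith : 0 < Real.log x), div_le_iff₀ (by linarith)]
    refine (hth x hx).trans ?_
    have h4 : 0 ≤ C * (x * Real.exp (-c * Real.sqrt (Real.log x))) := by positivity
    nlinarith
  have h2 : 2 / Real.log 2 ≤ 3 := by rw [div_le_iff₀ (by linarith)]; linarith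
  have h2' : 0 ≤ 2 / Real.log 2 := by positivity
  rw [primePi_eq hxpos.le, hpi, Li_parts hx]
  rw [abs_le] at h1 hIE ⊢
  constructor <;> linarith [h1.1, h1.2, hIE.1, hIE.2]

theorem g_mono {c t x : ℝ} (hc : 0 < c) (hc1 : c ≤ 1/4) (ht : 2 ≤ t) (htx : t ≤ x) :
    t * Real.exp (-c * Real.sqrt (Real.log t)) ≤ x * Real.exp (-c * Real.sqrt (Real.log x)) := by
  have htpos : 0 < t := by linarith
  have hxpos : 0 < x := by linarith
  have h1 : t * Real.exp (-c * Real.sqrt (Real.log t)) = Real.exp (Real.log t + -c * Real.sqrt (Real.log t)) := by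
    rw [Real.exp_add, Real.exp_log htpos]
  have h2 : x * Real.exp (-c * Real.sqrt (Real.log x)) = Real.exp (Real.log x + -c * Real.sqrt (Real.log x)) := by
    rw [Real.exp_add, Real.exp_log hxpos]
  rw [h1, h2]
  apply Real.exp_le_exp.mpr
  have hl1 := log_two_le ht
  norm_num at hl1
  have hl2 : Real.log t ≤ Real.log x := Real.log_le_log htpos htx
  have hs1 : Real.sqrt (Real.log t) ≤ Real.sqrt (Real.log x) := Real.sqrt_le_sqrt hl2
  have hs2 : (1/2:ℝ) ≤ Real.sqrt (Real.log t) := Real.le_sqrt_of_sq_le (by norm_num; linarith)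
  have q1 : Real.sqrt (Real.log t)^2 = Real.log t := Real.sq_sqrt (by linarith)
  have q2 : Real.sqrt (Real.log x)^2 = Real.log x := Real.sq_sqrt (by linarith)
  nlinarith [mul_nonneg (by linarith : 0 ≤ Real.sqrt (Real.log x) - Real.sqrt (Real.log t)) (by linarith : 0 ≤ Real.sqrt (Real.log x) + Real.sqrt (Real.log t) - c)]

theorem inv_log_cont : ContinuousOn (fun t : ℝ => 1 / Real.log t) (Set.Ici 2) := by
  apply ContinuousOn.div continuousOn_const log_cont
  intro t ht
  have := log_two_le ht
  norm_num at this
  linarith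

theorem Li_hasDerivAt {v : ℝ} (hv : 2 ≤ v) : HasDerivAt Li (1 / Real.log v) v := by
  have hl := log_two_le hv
  norm_num at hl
  unfold Li
  apply intervalIntegral.integral_hasDerivAt_right
  · apply ContinuousOn.intervalIntegrable
    rw [Set.uIcc_of_le hv]
    exact inv_log_cont.mono Set.Icc_subset_Ici_self
  · have hm : Measurable (fun t : ℝ => 1 / Real.log t) := by fun_prop
    exact hm.stronglyMeasurable.stronglyMeasurableAtFilter
  · exact continuousAt_const.div (Real.continuousAt_log (by linarith)) (by linarith)

theorem Li_nonneg {v : ℝ} (hv : 2 ≤ v) : 0 ≤ Li v := by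
  unfold Li
  apply intervalIntegral.integral_nonneg hv
  intro u hu
  have := log_two_le hu.1
  norm_num at this
  have : 0 < Real.log u := by linarith
  positivity

theorem Li_le {v : ℝ} (hv : 2 ≤ v) : Li v ≤ 8 * (v / Real.log v) := by
  have hvpos : 0 < v := by linarith
  have hlv := log_two_le hv
  norm_num at hlv
  have hlv0 : 0 < Real.log v := by linarith
  have hpt : ∀ t ∈ Set.Icc 2 v, 1 / Real.log t ≤ 8 * Real.sqrt v / Real.log v * (1 / (2 * Real.sqrt t)) := by
    intro t ht
    have htpos : 0 < t := by linarith [ht.1]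
    have hst : 0 < Real.sqrt t := Real.sqrt_pos.mpr htpos
    have hlt := log_two_le ht.1
    norm_num at hlt
    have hlt0 : 0 < Real.log t := by linarith
    have e : 8 * Real.sqrt v / Real.log v * (1 / (2 * Real.sqrt t)) = 4 * Real.sqrt v / (Real.log v * Real.sqrt t) := by
      field_simp; norm_num
    rw [e, div_le_div_iff₀ hlt0 (by positivity)]
    have hw : 1 ≤ Real.sqrt v / Real.sqrt t := by
      rw [le_div_iff₀ hst, one_mul]; exact Real.sqrt_le_sqrt ht.2
    set w := Real.sqrt v / Real.sqrt t with hwd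
    have hsv : Real.sqrt v = w * Real.sqrt t := by rw [hwd]; field_simp
    have hlw : Real.log w = Real.log v / 2 - Real.log t / 2 := by
      rw [hwd, Real.log_div (Real.sqrt_pos.mpr hvpos).ne' hst.ne', Real.log_sqrt hvpos.le, Real.log_sqrt htpos.le]
    have hlw2 := Real.log_le_sub_one_of_pos (by linarith : 0 < w)
    rw [hsv]
    have : Real.log v ≤ 4 * w * Real.log t := by nlinarith
    nlinarith
  have hcs : ContinuousOn (fun t : ℝ => 1 / (2 * Real.sqrt t)) (Set.uIcc 2 v) := by
    rw [Set.uIcc_of_le hv]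
    apply ContinuousOn.div continuousOn_const (by fun_prop)
    intro t ht
    have : 0 < Real.sqrt t := Real.sqrt_pos.mpr (by linarith [ht.1])
    positivity
  have hFTC := intervalIntegral.integral_eq_sub_of_hasDerivAt (a := 2) (b := v) (f := fun t => Real.sqrt t)
    (f' := fun t => 1 / (2 * Real.sqrt t)) (by
      intro t ht
      rw [Set.uIcc_of_le hv] at ht
      exact Real.hasDerivAt_sqrt (by linarith [ht.1])) hcs.intervalIntegrable
  calc Li v ≤ ∫ t in (2:ℝ)..v, 8 * Real.sqrt v / Real.log v * (1 / (2 * Real.sqrt t)) := by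
        apply intervalIntegral.integral_mono_on hv _ _ hpt
        · apply ContinuousOn.intervalIntegrable
          rw [Set.uIcc_of_le hv]; exact inv_log_cont.mono Set.Icc_subset_Ici_self
        · exact (hcs.intervalIntegrable).const_mul _
    _ = 8 * Real.sqrt v / Real.log v * (Real.sqrt v - Real.sqrt 2) := by
        rw [intervalIntegral.integral_const_mul, hFTC]
    _ ≤ 8 * Real.sqrt v / Real.log v * Real.sqrt v := by
        gcongr; linarith [Real.sqrt_nonneg 2]
    _ = _ := by
        have := Real.mul_self_sqrt hvpos.le
        rw [div_mul_eq_mul_div, mul_assoc, this, mul_div_assoc]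

theorem primePi_sum {t : ℝ} (ht : 0 ≤ t) :
    ∑ k ∈ Finset.Icc 0 ⌊t⌋₊, (if k.Prime then (1:ℝ) else 0) = (primePi t : ℝ) := by
  rw [primePi_eq ht, Nat.primeCounting, Nat.primeCounting', Nat.count_eq_card_filter_range, Finset.sum_boole]
  congr 2
  ext p
  simp

/-- partial summation step -/
theorem step_B {c C r y : ℝ} (hc : 0 < c) (hc1 : c ≤ 1/4) (hC : 0 < C)
    (hpi : ∀ x : ℝ, 2 ≤ x → |(primePi x : ℝ) - Li x| ≤ C * (x * Real.exp (-c * Real.sqrt (Real.log x))))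
    (hr : 1 ≤ r) (hy : 2 ≤ y) :
    |∑ k ∈ Finset.Icc 0 ⌊y⌋₊, Li (r * k) * (if k.Prime then (1:ℝ) else 0)
      - ∫ u in (2:ℝ)..y, Li (r * u) / Real.log u| ≤
      2 * (C * (y * Real.exp (-c * Real.sqrt (Real.log y)))) * Li (r * y) := by
  have hru : ∀ u : ℝ, 2 ≤ u → 2 ≤ r * u := fun u hu => by nlinarith
  have hd : ∀ u : ℝ, 2 ≤ u → HasDerivAt (fun u => Li (r * u)) (r / Real.log (r * u)) u := by
    intro u hu
    have h := (Li_hasDerivAt (hru u hu)).comp u ((hasDerivAt_id' u).const_mul r)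
    have e : 1 / Real.log (r * u) * (r * 1) = r / Real.log (r * u) := by ring
    rw [e] at h
    exact h
  have hdc : ContinuousOn (fun u => r / Real.log (r * u)) (Set.Icc 2 y) := by
    apply ContinuousOn.div continuousOn_const
    · apply ContinuousOn.log (by fun_prop)
      intro u hu
      linarith [hru u hu.1]
    · intro u hu
      have := log_two_le (hru u hu.1)
      norm_num at this
      linarith
  have hdc' : IntervalIntegrable (fun u => r / Real.log (r * u)) MeasureTheory.volume 2 y := by
    apply ContinuousOn.intervalIntegrable
    rwa [Set.uIcc_of_le hy]
  have hLc : ContinuousOn Li (Set.Icc 2 y) := fun u hu => (Li_hasDerivAt hu.1).continuousAt.continuousWithinAt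
  have hpos : ∀ u ∈ Set.Icc 2 y, 0 ≤ r / Real.log (r * u) := by
    intro u hu
    have := log_two_le (hru u hu.1)
    norm_num at this
    have : 0 < Real.log (r * u) := by linarith
    positivity
  have hdint : MeasureTheory.IntegrableOn (deriv fun u => Li (r * u)) (Set.Icc 2 y) := by
    refine (hdc.integrableOn_Icc).congr_fun ?_ measurableSet_Icc
    intro u hu
    exact (hd u hu.1).deriv.symm
  have hAbel := sum_mul_eq_sub_integral_mul₁ (𝕜 := ℝ) (f := fun u : ℝ => Li (r * u)) (fun k : ℕ => if k.Prime then (1:ℝ) else 0)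
    (by norm_num) (by norm_num) y (fun t ht => (hd t ht.1).differentiableAt) hdint
  have hI : ∫ t in Set.Ioc 2 y, deriv (fun u => Li (r * u)) t * ∑ k ∈ Finset.Icc 0 ⌊t⌋₊, (if k.Prime then (1:ℝ) else 0)
      = ∫ t in (2:ℝ)..y, r / Real.log (r * t) * (primePi t : ℝ) := by
    rw [intervalIntegral.integral_of_le hy]
    apply MeasureTheory.setIntegral_congr_fun measurableSet_Ioc
    intro t ht
    have ht2 : 2 ≤ t := ht.1.le
    simp only
    rw [(hd t ht2).deriv, primePi_sum (by linarith)]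
  rw [hI, primePi_sum (by linarith)] at hAbel
  have hparts := intervalIntegral.integral_mul_deriv_eq_deriv_mul (a := 2) (b := y)
    (u := fun u => Li (r * u)) (v := Li) (u' := fun u => r / Real.log (r * u)) (v' := fun u => 1 / Real.log u)
    (fun u hu => hd u (by rw [Set.uIcc_of_le hy] at hu; exact hu.1))
    (fun u hu => Li_hasDerivAt (by rw [Set.uIcc_of_le hy] at hu; exact hu.1)) hdc'
    (by
      apply ContinuousOn.intervalIntegrable
      rw [Set.uIcc_of_le hy]; exact inv_log_cont.mono Set.Icc_subset_Ici_self)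
  have hLi2 : Li 2 = 0 := by simp [Li]
  have hmul : ∀ u : ℝ, Li (r * u) * (1 / Real.log u) = Li (r * u) / Real.log u := fun u => by ring
  simp only [hmul, hLi2, mul_zero, sub_zero] at hparts
  have hmonopi : Monotone (fun t : ℝ => (primePi t : ℝ)) := by
    intro s t hst
    simp only
    unfold primePi
    norm_cast
    apply Set.ncard_le_ncard
    · intro p hp
      exact ⟨hp.1, hp.2.trans hst⟩
    · apply (Set.finite_Iic ⌊t⌋₊).subset
      intro p hp
      exact Nat.le_floor hp.2
  have hi1 : IntervalIntegrable (fun t => r / Real.log (r * t) * (primePi t : ℝ)) MeasureTheory.volume 2 y := by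
    apply (hmonopi.intervalIntegrable).continuousOn_mul
    rwa [Set.uIcc_of_le hy]
  have hi2 : IntervalIntegrable (fun t => r / Real.log (r * t) * Li t) MeasureTheory.volume 2 y := by
    apply ContinuousOn.intervalIntegrable
    rw [Set.uIcc_of_le hy]
    exact hdc.mul hLc
  have hsub := intervalIntegral.integral_sub hi1 hi2
  set G := C * (y * Real.exp (-c * Real.sqrt (Real.log y))) with hG
  have hGpos : 0 < G := by positivity
  have hR : ∀ u ∈ Set.Icc 2 y, |(primePi u : ℝ) - Li u| ≤ G := by
    intro u hu
    refine (hpi u hu.1).trans ?_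
    exact mul_le_mul_of_nonneg_left (g_mono hc hc1 hu.1 hu.2) hC.le
  have hFTC := intervalIntegral.integral_eq_sub_of_hasDerivAt (a := 2) (b := y) (f := fun u => Li (r * u))
    (f' := fun u => r / Real.log (r * u)) (fun u hu => hd u (by rw [Set.uIcc_of_le hy] at hu; exact hu.1)) hdc'
  have hJ : |∫ t in (2:ℝ)..y, (r / Real.log (r * t) * (primePi t : ℝ) - r / Real.log (r * t) * Li t)| ≤ G * Li (r * y) := by
    rw [← Real.norm_eq_abs]
    have hb : IntervalIntegrable (fun t => G * (r / Real.log (r * t))) MeasureTheory.volume 2 y := hdc'.const_mul G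
    refine (intervalIntegral.norm_integral_le_of_norm_le hy ?_ hb).trans ?_
    · refine Filter.Eventually.of_forall ?_
      intro t ht
      have ht' : t ∈ Set.Icc 2 y := ⟨ht.1.le, ht.2⟩
      rw [← mul_sub, Real.norm_eq_abs, abs_mul, abs_of_nonneg (hpos t ht'), mul_comm]
      exact mul_le_mul_of_nonneg_right (hR t ht') (hpos t ht')
    · rw [intervalIntegral.integral_const_mul, hFTC]
      apply mul_le_mul_of_nonneg_left _ hGpos.le
      linarith [Li_nonneg (hru 2 le_rfl)]
  have hfin : ∑ k ∈ Finset.Icc 0 ⌊y⌋₊, Li (r * k) * (if k.Prime then (1:ℝ) else 0)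
      - ∫ u in (2:ℝ)..y, Li (r * u) / Real.log u
      = Li (r * y) * ((primePi y : ℝ) - Li y) - ∫ t in (2:ℝ)..y, (r / Real.log (r * t) * (primePi t : ℝ) - r / Real.log (r * t) * Li t) := by
    rw [hAbel, hparts, hsub]; ring
  rw [hfin]
  refine (abs_sub _ _).trans ?_
  rw [abs_mul, abs_of_nonneg (Li_nonneg (hru y hy))]
  have := mul_le_mul_of_nonneg_left (hR y ⟨hy, le_rfl⟩) (Li_nonneg (hru y hy))
  linarith

theorem step_A {c C r y : ℝ} (hc : 0 < c) (hc1 : c ≤ 1/4) (hC : 0 < C)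
    (hpi : ∀ x : ℝ, 2 ≤ x → |(primePi x : ℝ) - Li x| ≤ C * (x * Real.exp (-c * Real.sqrt (Real.log x))))
    (hr : 1 ≤ r) (hy : 2 ≤ y) :
    |∑ k ∈ Finset.Icc 0 ⌊y⌋₊, (primePi (r * k) : ℝ) * (if k.Prime then (1:ℝ) else 0)
      - ∑ k ∈ Finset.Icc 0 ⌊y⌋₊, Li (r * k) * (if k.Prime then (1:ℝ) else 0)| ≤
      y * (C * (r * y * Real.exp (-c * Real.sqrt (Real.log (r * y))))) := by
  set G := C * (r * y * Real.exp (-c * Real.sqrt (Real.log (r * y)))) with hG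
  have hGpos : 0 < G := by positivity
  rw [← Finset.sum_sub_distrib]
  refine (Finset.abs_sum_le_sum_abs _ _).trans ?_
  calc _ ≤ ∑ k ∈ Finset.Icc 0 ⌊y⌋₊, (if k = 0 then 0 else G) := by
        apply Finset.sum_le_sum
        intro k hk
        by_cases hp : k.Prime
        · have hk2 : (2:ℝ) ≤ k := by exact_mod_cast hp.two_le
          have hky : (k:ℝ) ≤ y := (Nat.le_floor_iff (by linarith)).mp (Finset.mem_Icc.mp hk).2
          simp only [hp, if_true, mul_one, hp.ne_zero, if_false]
          refine (hpi _ (by nlinarith)).trans ?_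
          exact mul_le_mul_of_nonneg_left (g_mono hc hc1 (by nlinarith) (by nlinarith)) hC.le
        · simp only [hp, if_false, mul_zero, sub_zero, abs_zero]
          split_ifs <;> positivity
    _ = ⌊y⌋₊ * G := by
        rw [← Nat.range_succ_eq_Icc_zero, Finset.sum_range_succ']
        simp
    _ ≤ y * G := by
        gcongr
        exact Nat.floor_le (by linarith)

set_option maxHeartbeats 1000000 in
theorem stmt_17 :
    ∃ c C : ℝ, 0 < c ∧ 0 < C ∧ ∀ x r : ℝ, 1 ≤ r → r ≤ x / 4 →
      |(∑ p ∈ (Finset.range (⌊Real.sqrt (x / r)⌋₊ + 1)).filter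
            (fun p : ℕ => p.Prime ∧ (p : ℝ) ≤ Real.sqrt (x / r)),
          (primePi (r * p) : ℝ))
        - ∫ u in (2 : ℝ)..Real.sqrt (x / r), Li (r * u) / Real.log u| ≤
        C * (x / Real.log x * Real.exp (-c * Real.sqrt (Real.log (x / r)))) := by
  obtain ⟨c, C, hc, hc1, hC, hpi⟩ := pi_bound
  refine ⟨c / 4, C * (32 / c ^ 2) + 32 * C, by positivity, by positivity, ?_⟩
  intro x r hr hrx
  have hr0 : 0 < r := by linarith
  have hx4 : 4 ≤ x := by linarith
  have hx0 : 0 < x := by linarith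
  have hxr : 4 ≤ x / r := by rw [le_div_iff₀ hr0]; linarith
  have hxrx : x / r ≤ x := div_le_self hx0.le hr
  have hlogy : Real.log (Real.sqrt (x / r)) = Real.log (x / r) / 2 := Real.log_sqrt (by linarith)
  have hysq : Real.sqrt (x / r) ^ 2 = x / r := Real.sq_sqrt (by linarith)
  have hy2 : 2 ≤ Real.sqrt (x / r) := Real.le_sqrt_of_sq_le (by linarith)
  set y := Real.sqrt (x / r) with hy
  have hy0 : 0 < y := by linarith
  have hryy : r * y * y = x := by
    rw [mul_assoc, ← sq, hysq]; field_simp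
  have hlogxr : Real.log (x / r) = Real.log x - Real.log r := Real.log_div hx0.ne' hr0.ne'
  have hlogr : 0 ≤ Real.log r := Real.log_nonneg hr
  have hlogx : 0.69 ≤ Real.log x := log_two_le (by linarith)
  norm_num at hlogx
  have hlogx0 : 0 < Real.log x := by linarith
  have hlogxr0 : 0 ≤ Real.log (x / r) := Real.log_nonneg (by linarith)
  have hlogry : Real.log (r * y) = Real.log r + Real.log (x / r) / 2 := by
    rw [Real.log_mul hr0.ne' hy0.ne', hlogy]
  have hlogry' : Real.log x / 2 ≤ Real.log (r * y) := by linarith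
  have hsum : (∑ p ∈ (Finset.range (⌊y⌋₊ + 1)).filter
            (fun p : ℕ => p.Prime ∧ (p : ℝ) ≤ y), (primePi (r * p) : ℝ))
      = ∑ k ∈ Finset.Icc 0 ⌊y⌋₊, (primePi (r * k) : ℝ) * (if k.Prime then (1:ℝ) else 0) := by
    rw [Finset.sum_filter, ← Nat.range_succ_eq_Icc_zero]
    apply Finset.sum_congr rfl
    intro k hk
    have hky : (k:ℝ) ≤ y := (Nat.le_floor_iff hy0.le).mp (Nat.lt_succ_iff.mp (Finset.mem_range.mp hk))
    by_cases hp : k.Prime <;> simp [hp, hky]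
  rw [hsum]
  have hA := step_A hc hc1 hC hpi hr hy2
  have hB := step_B hc hc1 hC hpi hr hy2
  have hLi := Li_le (by nlinarith : 2 ≤ r * y)
  set w := Real.sqrt (Real.log x) with hw
  set w' := Real.sqrt (Real.log (x / r)) with hw'
  have hw0 : 0 ≤ w := Real.sqrt_nonneg _
  have hw'0 : 0 ≤ w' := Real.sqrt_nonneg _
  have hww' : w' ≤ w := Real.sqrt_le_sqrt (by linarith)
  have hwsq : w ^ 2 = Real.log x := Real.sq_sqrt hlogx0.le
  have hw'sq : w' ^ 2 = Real.log (x / r) := Real.sq_sqrt hlogxr0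
  set T := Real.exp (-(c / 4) * w') with hT
  have hT0 : 0 < T := Real.exp_pos _
  have hA1 : Real.exp (-c * Real.sqrt (Real.log (r * y))) ≤ 32 / c ^ 2 / Real.log x * T := by
    have h1 : w / 2 ≤ Real.sqrt (Real.log (r * y)) := Real.le_sqrt_of_sq_le (by nlinarith)
    have h2 : Real.exp (-c * Real.sqrt (Real.log (r * y))) ≤ Real.exp (-(c / 4 * w)) * Real.exp (-(c / 4) * w') := by
      rw [← Real.exp_add]
      apply Real.exp_le_exp.mpr
      have h4 := mul_le_mul_of_nonneg_left h1 hc.le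
      have h5 := mul_le_mul_of_nonneg_left hww' hc.le
      linarith
    refine h2.trans (mul_le_mul_of_nonneg_right ?_ hT0.le)
    have h3 := Real.quadratic_le_exp_of_nonneg (by positivity : 0 ≤ c / 4 * w)
    rw [Real.exp_neg, div_div, inv_le_comm₀ (Real.exp_pos _) (by positivity), inv_div]
    refine le_trans ?_ h3
    rw [← hwsq]
    have : 0 ≤ c / 4 * w := by positivity
    have e : c ^ 2 * w ^ 2 / 32 = (c / 4 * w) ^ 2 / 2 := by ring
    rw [e]; linarith
  have hA2 : y * (C * (r * y * Real.exp (-c * Real.sqrt (Real.log (r * y))))) ≤ C * (32 / c ^ 2) * (x / Real.log x * T) := by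
    calc _ = C * x * Real.exp (-c * Real.sqrt (Real.log (r * y))) := by rw [← hryy]; ring
      _ ≤ C * x * (32 / c ^ 2 / Real.log x * T) := by gcongr
      _ = _ := by ring
  have hB1 : Real.exp (-c * Real.sqrt (Real.log y)) ≤ T := by
    apply Real.exp_le_exp.mpr
    have h1 : w' / 2 ≤ Real.sqrt (Real.log y) := Real.le_sqrt_of_sq_le (by rw [hlogy]; nlinarith)
    have h2 := mul_le_mul_of_nonneg_left h1 hc.le
    have h3 := mul_nonneg hc.le hw'0
    linarith
  have hB2 : Li (r * y) ≤ 16 * (r * y / Real.log x) := by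
    refine hLi.trans ?_
    have : r * y / Real.log (r * y) ≤ r * y / (Real.log x / 2) := by gcongr
    have e : r * y / (Real.log x / 2) = 2 * (r * y / Real.log x) := by field_simp
    linarith
  have hB3 : 2 * (C * (y * Real.exp (-c * Real.sqrt (Real.log y)))) * Li (r * y) ≤ 32 * C * (x / Real.log x * T) := by
    calc _ ≤ 2 * (C * (y * T)) * (16 * (r * y / Real.log x)) := by
          have := Li_nonneg (by nlinarith : 2 ≤ r * y)
          gcongr
      _ = _ := by rw [← hryy]; ring
  refine (abs_sub_le _ _ _).trans ((add_le_add hA hB).trans ?_)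
  linarith
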